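/- arXiv:1705.06710 — 2 statements merged into one kernel-verified Lean document; each statement's English description precedes it below -/
import Mathlib

section
/- Let 1 < p < ∞, p ≠ 2, -1 < α < ∞, and let q be the conjugate exponent of p. Let k ∈ A^q_α be nonzero, let F be the extremal function for k, and let k̂ = ck for some c > 0. Let G ∈ A^p_α with ‖G‖_{p,α} = 1, and suppose that the Bergman projection P_α(|G|^p/Ḡ) belongs to A^q_α and that for some 0 < δ < 1, ‖P_α(|G|^p/Ḡ) - k̂‖_{q,α} < δ. Then: if 2 < p < ∞, ‖F - G‖_{p,α} ≤ 2 p^{1/p} δ^{1/p}; and if 1 < p < 2, ‖F - G‖_{p,α} ≤ 2√2 (p-1)^{-1/2} δ^{1/2}. -/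
/-!
Write `ψ = |G|^p / conj G` and `K = P_α ψ`. The proof rests on the Bregman gap of `w ↦ |w|^p`
(`gap`), which after integration equals `p (1 - Re ∫ F conj ψ dA_α)` when `F` and `G` have unit norm.

The integral of the gap is small by duality (`integral_gap_le`). For `f ∈ A^p_α` the pairings of `f`
with `ψ` and with `K` agree. By Hölder's inequality `K` may be replaced by `c k` at the cost of `δ`,
and by extremality `F` pairs at least as well with `c k` as `G` does, while `G` pairs with `ψ` to
`1`. Hence `Re ∫ F conj ψ dA_α ≥ 1 - 2 δ`, and the gap has integral at most `2 p δ`.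

The gap controls `F - G` by pointwise inequalities. For `p > 2` it dominates `2^(1-p) |F - G|^p`
(`norm_sub_rpow_le_gap`, from the scalar Clarkson inequality). For `p < 2` it dominates
`(p (p - 1) / 2) (|F| + |G|)^(p-2) |F - G|²` (`sq_mul_rpow_le_gap`, a Taylor estimate), and Hölder's
inequality with exponents `2/p` and `2/(2-p)` yields the bound on `∫ |F - G|^p`.

The identity `∫ f conj K dA_α = ∫ f conj ψ dA_α` is `integral_mul_conj_bergmanProj`. For a dilation `K (r z)` with `r < 1` the kernel is bounded, and Fubini's theorem with
the reproducing property (`reproducing`) gives `∫ f(z) conj K(r z) = ∫ f(r w) conj ψ(w)`. Then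
`r → 1` on both sides, using that dilations converge weakly (`tendsto_integral_dilate`), which follows
from the maximum principle in a complex dilation parameter. The reproducing property itself is the
mean value property at the origin, transported by the disc automorphism exchanging `0` and `a`.
-/

open MeasureTheory Complex Set Metric

noncomputable section

/-- The open unit disc in `ℂ`. -/
def unitDisc : Set ℂ := Metric.ball 0 1

/-- The density of the weighted measure `dA_α = (α+1) π⁻¹ (1-|z|²)^α dA`
with respect to area measure. -/
def wt (α : ℝ) (z : ℂ) : ℝ := (α + 1) / Real.pi * (1 - ‖z‖ ^ 2) ^ α

/-- The norm `‖f‖_{p,α}` of the weighted Bergman space `A^p_α`. -/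
def bNorm (p α : ℝ) (f : ℂ → ℂ) : ℝ :=
  (∫ z in unitDisc, ‖f z‖ ^ p * wt α z) ^ (1 / p)

/-- Membership in the weighted Bergman space `A^p_α`: analytic on the unit disc
with finite weighted `p`-norm. -/
def MemAp (p α : ℝ) (f : ℂ → ℂ) : Prop :=
  DifferentiableOn ℂ f unitDisc ∧
    IntegrableOn (fun z => ‖f z‖ ^ p * wt α z) unitDisc

/-- The pairing `∫_𝔻 f k̄ dA_α`. -/
def pairing (α : ℝ) (f k : ℂ → ℂ) : ℂ :=
  ∫ z in unitDisc, f z * (starRingEnd ℂ) (k z) * (wt α z : ℂ)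

/-- `F` is the extremal function in `A^p_α` for the integral kernel `k`:
it has unit norm and maximizes `Re ∫_𝔻 F k̄ dA_α` over the unit ball. -/
def IsExtremalFor (p α : ℝ) (k F : ℂ → ℂ) : Prop :=
  MemAp p α F ∧ bNorm p α F = 1 ∧
    ∀ g, MemAp p α g → bNorm p α g ≤ 1 →
      (pairing α g k).re ≤ (pairing α F k).re

/-- The Bergman projection
`P_α g(z) = ∫_𝔻 g(w) (1 - z w̄)^{-(2+α)} dA_α(w)`. -/
def bergmanProj (α : ℝ) (g : ℂ → ℂ) : ℂ → ℂ := fun z =>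
  ∫ w in unitDisc, g w / (1 - z * (starRingEnd ℂ) w) ^ ((2:ℂ) + (α:ℂ)) * (wt α w : ℂ)

/-- The function `|G|^p / Ḡ = |G|^{p-1} sgn G` (interpreted as `0` at zeros of `G`). -/
def sgnPow (p : ℝ) (G : ℂ → ℂ) : ℂ → ℂ := fun z =>
  if G z = 0 then 0 else ((‖G z‖ ^ (p - 1) : ℝ) : ℂ) * (G z / (‖G z‖ : ℂ))

/-! ### Pointwise estimates for the Bregman gap -/

/-- At a zero of `G` the division `0 / 0 = 0` already gives the right value. -/
lemma sgnPow_eq (p : ℝ) (G : ℂ → ℂ) (z : ℂ) :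
    sgnPow p G z = ((‖G z‖ ^ (p - 1) : ℝ) : ℂ) * (G z / (‖G z‖ : ℂ)) := by
  unfold sgnPow
  split_ifs with h
  · simp [h]
  · rfl

lemma norm_sgnPow {p : ℝ} (hp : 1 < p) (G : ℂ → ℂ) (z : ℂ) :
    ‖sgnPow p G z‖ = ‖G z‖ ^ (p - 1) := by
  rw [sgnPow_eq]
  by_cases h : G z = 0
  · simp [h, Real.zero_rpow (by linarith : p - 1 ≠ 0)]
  · have : ‖G z‖ ≠ 0 := by simpa using h
    simp [this, abs_of_nonneg (Real.rpow_nonneg (norm_nonneg (G z)) (p - 1))]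

lemma rpow_pred_mul {p x : ℝ} (hp : 1 < p) (hx : 0 ≤ x) : x ^ (p - 1) * x = x ^ p := by
  rcases hx.eq_or_lt with rfl | hx
  · simp [Real.zero_rpow (by linarith : p ≠ 0)]
  · rw [← Real.rpow_add_one hx.ne']; simp

lemma self_mul_conj_sgnPow {p : ℝ} (hp : 1 < p) (G : ℂ → ℂ) (z : ℂ) :
    G z * (starRingEnd ℂ) (sgnPow p G z) = ((‖G z‖ ^ p : ℝ) : ℂ) := by
  rw [sgnPow_eq, ← rpow_pred_mul hp (norm_nonneg _)]
  by_cases h : G z = 0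
  · simp [h]
  · have h' : (‖G z‖ : ℂ) ≠ 0 := by simpa using h
    have := Complex.mul_conj' (G z)
    simp only [map_mul, map_div₀, Complex.conj_ofReal, Complex.ofReal_mul]
    field_simp
    rw [mul_right_comm, this, mul_comm]

/-- The Bregman gap of `w ↦ |w|^p` between `F z` and `G z`:
`|F|^p - |G|^p - p Re ((F - G) conj (|G|^p / conj G))`, with the `G`-terms collected. -/
def gap (p : ℝ) (F G : ℂ → ℂ) (z : ℂ) : ℝ :=
  ‖F z‖ ^ p + (p - 1) * ‖G z‖ ^ p - p * (F z * (starRingEnd ℂ) (sgnPow p G z)).re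

lemma young_pow {p s y : ℝ} (hp : 1 < p) (hs : 0 ≤ s) (hy : 0 ≤ y) :
    p * (s * y ^ (p - 1)) ≤ s ^ p + (p - 1) * y ^ p := by
  have h := Real.young_inequality_of_nonneg hs (Real.rpow_nonneg hy (p - 1))
    (Real.HolderConjugate.conjExponent hp)
  rw [← Real.rpow_mul hy, Real.conjExponent] at h
  have hp1 : p - 1 ≠ 0 := by linarith
  rw [mul_div_cancel₀ _ hp1] at h
  have h2 := mul_le_mul_of_nonneg_left h (by linarith : 0 ≤ p)
  calc p * (s * y ^ (p - 1)) ≤ p * (s ^ p / p + y ^ p / (p / (p - 1))) := h2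
    _ = _ := by field_simp

/-- The gap is nonnegative: `|w|^p` lies above its tangent planes. -/
lemma gap_nonneg {p : ℝ} (hp : 1 < p) (F G : ℂ → ℂ) (z : ℂ) : 0 ≤ gap p F G z := by
  have h1 : (F z * (starRingEnd ℂ) (sgnPow p G z)).re ≤ ‖F z‖ * ‖G z‖ ^ (p - 1) := by
    refine (Complex.re_le_norm _).trans ?_
    rw [norm_mul, Complex.norm_conj, norm_sgnPow hp]
  have := young_pow hp (norm_nonneg (F z)) (norm_nonneg (G z))
  have := mul_le_mul_of_nonneg_left h1 (by linarith : 0 ≤ p)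
  unfold gap; linarith

/-- Clarkson's inequality for scalars. -/
lemma clarkson_scalar {p : ℝ} (hp : 2 < p) (a b : ℂ) :
    ‖(a + b) / 2‖ ^ p + ‖(a - b) / 2‖ ^ p ≤ (‖a‖ ^ p + ‖b‖ ^ p) / 2 := by
  have key : ∀ x : ℝ, 0 ≤ x → x ^ p = (x ^ 2) ^ (p / 2) := fun x hx => by
    rw [← Real.rpow_natCast, ← Real.rpow_mul hx]; congr 1; push_cast; ring
  have h1 := Real.add_rpow_le_rpow_add (sq_nonneg ‖(a + b) / 2‖) (sq_nonneg ‖(a - b) / 2‖)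
    (by linarith : (1:ℝ) ≤ p / 2)
  have h2 : ‖(a + b) / 2‖ ^ 2 + ‖(a - b) / 2‖ ^ 2 = (1/2 : ℝ) * ‖a‖ ^ 2 + (1/2 : ℝ) * ‖b‖ ^ 2 := by
    simp only [Complex.sq_norm, Complex.normSq_apply]
    simp; ring
  have h3 := (convexOn_rpow (by linarith : (1:ℝ) ≤ p / 2)).2
    (show ‖a‖ ^ 2 ∈ Set.Ici (0:ℝ) from sq_nonneg ‖a‖) (show ‖b‖ ^ 2 ∈ Set.Ici (0:ℝ) from sq_nonneg ‖b‖)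
    (by norm_num : (0:ℝ) ≤ 1/2) (by norm_num : (0:ℝ) ≤ 1/2) (by norm_num)
  simp only [smul_eq_mul] at h3
  rw [key _ (norm_nonneg _), key ‖(a - b) / 2‖ (norm_nonneg _), key ‖a‖ (norm_nonneg _),
    key ‖b‖ (norm_nonneg _)]
  rw [h2] at h1
  linarith

/-- For `p > 2` the gap controls `|F - G|^p`: apply `gap_nonneg` at the midpoint of `F` and `G`
and insert Clarkson's inequality. -/
lemma norm_sub_rpow_le_gap {p : ℝ} (hp : 2 < p) (F G : ℂ → ℂ) (z : ℂ) :
    ‖F z - G z‖ ^ p ≤ 2 ^ (p - 1) * gap p F G z := by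
  have h1 := gap_nonneg (by linarith : 1 < p) (fun z => (F z + G z) / 2) G z
  have h2 := clarkson_scalar hp (F z) (G z)
  have h3 : ‖F z - G z‖ ^ p = 2 ^ p * ‖(F z - G z) / 2‖ ^ p := by
    rw [norm_div, Real.div_rpow (norm_nonneg _) (norm_nonneg _)]
    simp; field_simp
  have h4 : (2:ℝ) ^ p = 2 ^ (p - 1) * 2 := (rpow_pred_mul (by linarith) (by norm_num)).symm
  have h5 : ((F z + G z) / 2 * (starRingEnd ℂ) (sgnPow p G z)).re =
      ((F z * (starRingEnd ℂ) (sgnPow p G z)).re + ‖G z‖ ^ p) / 2 := by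
    have : (F z + G z) / 2 * (starRingEnd ℂ) (sgnPow p G z) =
      ((1/2 : ℝ) : ℂ) * (F z * (starRingEnd ℂ) (sgnPow p G z) + ((‖G z‖ ^ p : ℝ) : ℂ)) := by
      rw [← self_mul_conj_sgnPow (by linarith)]; push_cast; ring
    rw [this, Complex.re_ofReal_mul, Complex.add_re, Complex.ofReal_re]; ring
  unfold gap at h1 ⊢
  simp only [h5] at h1
  rw [h3, h4, mul_assoc]
  refine mul_le_mul_of_nonneg_left ?_ (by positivity)
  linarith

/-- The one-dimensional second-order Taylor bound behind `sq_mul_rpow_le_gap`: on `[0, S]`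
the function `s ↦ s^p - (p(p-1)/2) S^(p-2) s²` is convex. -/
lemma taylor_pos {p x y : ℝ} (hp : 1 < p) (hp2 : p < 2) (hx : 0 ≤ x) (hy : 0 < y) :
    p * (p - 1) / 2 * (x + y) ^ (p - 2) * (x - y) ^ 2 ≤
      x ^ p + (p - 1) * y ^ p - p * (x * y ^ (p - 1)) := by
  set S := x + y with hS
  have hS0 : 0 < S := by positivity
  set C := p * (p - 1) / 2 * S ^ (p - 2) with hC
  have hconv : ConvexOn ℝ (Icc 0 S) (fun s => s ^ p - C * s ^ 2) := by
    apply convexOn_of_hasDerivWithinAt2_nonneg (convex_Icc _ _)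
      (f' := fun s => p * s ^ (p - 1) - C * (2 * s))
      (f'' := fun s => p * ((p - 1) * s ^ (p - 1 - 1)) - C * 2)
    · exact ((continuous_id.rpow_const (fun _ => Or.inr (by linarith))).sub
        (by fun_prop)).continuousOn
    · intro s hs
      rw [interior_Icc] at hs
      have h1 := (Real.hasDerivAt_rpow_const (x := s) (p := p) (Or.inl hs.1.ne'))
      have h2 := ((hasDerivAt_id s).pow 2).const_mul C
      refine ((h1.sub h2).congr_deriv ?_).hasDerivWithinAt
      simp
    · intro s hs
      rw [interior_Icc] at hs
      have h1 := (Real.hasDerivAt_rpow_const (x := s) (p := p - 1) (Or.inl hs.1.ne')).const_mul p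
      have h2 := ((hasDerivAt_id s).const_mul 2).const_mul C
      refine ((h1.sub h2).congr_deriv ?_).hasDerivWithinAt
      simp
    · intro s hs
      rw [interior_Icc] at hs
      have h3 : S ^ (p - 2) ≤ s ^ (p - 2) :=
        Real.rpow_le_rpow_of_nonpos hs.1 hs.2.le (by linarith)
      have h4 : p - 1 - 1 = p - 2 := by ring
      simp only [h4, hC]
      have : 0 ≤ p * (p - 1) := by nlinarith
      nlinarith [mul_le_mul_of_nonneg_left h3 this]
  have hd : HasDerivAt (fun s => s ^ p - C * s ^ 2) (p * y ^ (p - 1) - C * (2 * y)) y := by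
    have h1 := (Real.hasDerivAt_rpow_const (x := y) (p := p) (Or.inl hy.ne'))
    have h2 := ((hasDerivAt_id y).pow 2).const_mul C
    refine ((h1.sub h2).congr_deriv ?_)
    simp
  have hyp := rpow_pred_mul hp hy.le
  have hxm : x ∈ Icc 0 S := ⟨hx, by linarith⟩
  have hym : y ∈ Icc 0 S := ⟨hy.le, by linarith⟩
  rcases lt_trichotomy x y with h | h | h
  · have := hconv.slope_le_of_hasDerivAt hxm hym h hd
    rw [slope_def_field, div_le_iff₀ (by linarith)] at this
    nlinarith
  · subst h; simp; nlinarith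
  · have := hconv.le_slope_of_hasDerivAt hym hxm h hd
    rw [slope_def_field, le_div_iff₀ (by linarith)] at this
    nlinarith

/-- The opposite extreme configuration, `F` and `G` pointing in opposite directions. -/
lemma taylor_neg {p x y : ℝ} (hp : 1 < p) (hp2 : p < 2) (hx : 0 ≤ x) (hy : 0 < y) :
    p * (p - 1) / 2 * (x + y) ^ (p - 2) * (x + y) ^ 2 ≤
      x ^ p + (p - 1) * y ^ p + p * (x * y ^ (p - 1)) := by
  have hS : 0 < x + y := by positivity
  have e : (x + y) ^ (p - 2) * (x + y) ^ 2 = (x + y) ^ (p - 1) * (x + y) := by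
    have : (x + y) ^ (p - 1) = (x + y) ^ (p - 2) * (x + y) := by
      rw [← Real.rpow_add_one hS.ne']; ring_nf
    rw [this]; ring
  rw [mul_assoc, e, ← rpow_pred_mul hp hx, ← rpow_pred_mul hp hy.le]
  -- `u ↦ u^(p-2)` is decreasing, multiplied out so that `u = 0` is allowed.
  have key : ∀ u, 0 ≤ u → u ≤ x + y → u * (x + y) ^ (p - 1) ≤ u ^ (p - 1) * (x + y) := by
    intro u hu hu'
    rcases hu.eq_or_lt with rfl | hu
    · rw [zero_mul]; positivity
    have a1 : ∀ v : ℝ, 0 < v → v = v ^ (p - 1) * v ^ (2 - p) := fun v hv => by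
      rw [← Real.rpow_add hv]; norm_num
    have a2 : u ^ (2 - p) ≤ (x + y) ^ (2 - p) := Real.rpow_le_rpow hu.le hu' (by linarith)
    calc u * (x + y) ^ (p - 1) = u ^ (p - 1) * (x + y) ^ (p - 1) * u ^ (2 - p) := by
          nth_rw 1 [a1 u hu]; ring
      _ ≤ u ^ (p - 1) * (x + y) ^ (p - 1) * (x + y) ^ (2 - p) := by gcongr
      _ = u ^ (p - 1) * (x + y) := by rw [mul_assoc, ← a1 _ hS]
  have kx := key x hx (by linarith)
  have ky := key y hy.le (by linarith)
  have hE : 0 ≤ (x + y) ^ (p - 1) := by positivity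
  have hB : 0 ≤ y ^ (p - 1) := by positivity
  set E := (x + y) ^ (p - 1)
  -- After multiplication by `x + y` the two sides can be compared monomial by monomial.
  refine le_of_mul_le_mul_left ?_ hS
  have c1 : p * (p - 1) / 2 ≤ 1 := by nlinarith
  have c2 : p * (p - 1) / 2 ≤ p - 1 := by nlinarith
  have c3 : p * (p - 1) ≤ p := by nlinarith
  calc (x + y) * (p * (p - 1) / 2 * (E * (x + y)))
      = E * (p * (p - 1) / 2 * x ^ 2 + p * (p - 1) / 2 * y ^ 2 + p * (p - 1) * (x * y)) := by ring
    _ ≤ E * (1 * x ^ 2 + (p - 1) * y ^ 2 + p * (x * y)) := by gcongr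
    _ = x * E * x + (p - 1) * (y * E) * y + p * (y * E) * x := by ring
    _ ≤ x ^ (p - 1) * (x + y) * x + (p - 1) * (y ^ (p - 1) * (x + y)) * y
          + p * (y ^ (p - 1) * (x + y)) * x := by
        have : 0 ≤ p - 1 := by linarith
        gcongr
    _ = _ := by ring

/-- For `1 < p < 2` the gap controls the weighted square `|F - G|² (|F| + |G|)^(p-2)`. Both
sides are affine in `Re (F conj G)`, so only the collinear configurations matter. -/
lemma sq_mul_rpow_le_gap {p : ℝ} (hp : 1 < p) (hp2 : p < 2) (F G : ℂ → ℂ) (z : ℂ) :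
    p * (p - 1) / 2 * (‖F z‖ + ‖G z‖) ^ (p - 2) * ‖F z - G z‖ ^ 2 ≤ gap p F G z := by
  by_cases hG : G z = 0
  · simp only [gap, sgnPow, hG]
    simp only [norm_zero, add_zero, sub_zero, if_true, map_zero, mul_zero, Complex.zero_re,
      Real.zero_rpow (by linarith : p ≠ 0)]
    rcases (norm_nonneg (F z)).eq_or_lt with h | h
    · simp [← h, Real.zero_rpow (by linarith : p ≠ 0)]
    · rw [mul_assoc, ← Real.rpow_natCast ‖F z‖ 2, ← Real.rpow_add h]
      have : 0 ≤ ‖F z‖ ^ p := by positivity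
      norm_num
      have h2 : p * (p - 1) / 2 ≤ 1 := by nlinarith
      nlinarith
  set x := ‖F z‖ with hx
  set y := ‖G z‖ with hy
  have hy0 : 0 < y := by simpa [hy] using hG
  -- `t` is the component of `F z` along `G z`; collinear configurations have `t = x` or `t = -x`.
  set t := (F z * (starRingEnd ℂ) (G z)).re / y with ht
  have e1 : ‖F z - G z‖ ^ 2 = x ^ 2 + y ^ 2 - 2 * y * t := by
    have : y * t = (F z * (starRingEnd ℂ) (G z)).re := by rw [ht]; field_simp
    rw [mul_assoc, this, Complex.sq_norm, Complex.normSq_sub, hx, hy, Complex.sq_norm,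
      Complex.sq_norm]
  have e2 : (F z * (starRingEnd ℂ) (sgnPow p G z)).re = t * y ^ (p - 1) := by
    rw [sgnPow_eq]
    have : F z * (starRingEnd ℂ) (((‖G z‖ ^ (p - 1) : ℝ) : ℂ) * (G z / (‖G z‖ : ℂ))) =
      ((y ^ (p - 1) / y : ℝ) : ℂ) * (F z * (starRingEnd ℂ) (G z)) := by
      simp only [map_mul, map_div₀, Complex.conj_ofReal, ← hy]; push_cast; ring
    rw [this, Complex.re_ofReal_mul, ht]; ring
  have ht' : |t| ≤ x := by
    rw [ht, abs_div, abs_of_pos hy0, div_le_iff₀ hy0]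
    refine (Complex.abs_re_le_norm _).trans ?_
    rw [norm_mul, Complex.norm_conj]
  have hx0 : 0 ≤ x := norm_nonneg _
  have h1 := taylor_pos hp hp2 hx0 hy0
  have h2 := taylor_neg hp hp2 hx0 hy0
  unfold gap
  rw [e1, e2, ← hx, ← hy]
  set C := p * (p - 1) / 2 * (x + y) ^ (p - 2)
  set D := y ^ (p - 1)
  rw [abs_le] at ht'
  rcases hx0.eq_or_lt with h | h
  · have : t = 0 := by rw [← h] at ht'; linarith [ht'.1, ht'.2]
    rw [this]; rw [← h] at h1 ⊢; linarith
  -- `t` is the convex combination of `x` and `-x` with weights `(x + t) / 2x` and `(x - t) / 2x`.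
  · have h3 := mul_le_mul_of_nonneg_left h1 (by linarith : 0 ≤ x + t)
    have h4 := mul_le_mul_of_nonneg_left h2 (by linarith : 0 ≤ x - t)
    refine le_of_mul_le_mul_left ?_ (by linarith : 0 < 2 * x)
    linarith

/-! ### The weighted area measure -/

/-- The probability measure `dA_α` on the disc, as a measure on `ℂ`. -/
def diskMeas (α : ℝ) : Measure ℂ :=
  (volume.restrict unitDisc).withDensity (fun z => ENNReal.ofReal (wt α z))

lemma mem_unitDisc {z : ℂ} : z ∈ unitDisc ↔ ‖z‖ < 1 := by simp [unitDisc]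

lemma measurableSet_unitDisc : MeasurableSet unitDisc := measurableSet_ball

lemma measurable_wt (α : ℝ) : Measurable (wt α) := by
  unfold wt
  fun_prop

lemma wt_nonneg {α : ℝ} (hα : -1 < α) {z : ℂ} (hz : z ∈ unitDisc) : 0 ≤ wt α z := by
  rw [mem_unitDisc] at hz
  have h1 : 0 ≤ 1 - ‖z‖ ^ 2 := by nlinarith [norm_nonneg z]
  have : 0 ≤ α + 1 := by linarith
  unfold wt
  positivity

section
variable {E : Type*} [NormedAddCommGroup E] [NormedSpace ℝ E]

lemma integral_diskMeas {α : ℝ} (hα : -1 < α) (f : ℂ → E) :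
    ∫ z, f z ∂(diskMeas α) = ∫ z in unitDisc, wt α z • f z := by
  unfold diskMeas
  rw [integral_withDensity_eq_integral_toReal_smul (measurable_wt α).ennreal_ofReal
    (Filter.Eventually.of_forall fun _ => ENNReal.ofReal_lt_top)]
  refine setIntegral_congr_fun measurableSet_unitDisc fun z hz => ?_
  simp only [ENNReal.toReal_ofReal (wt_nonneg hα hz)]

lemma integrable_diskMeas {α : ℝ} (hα : -1 < α) (f : ℂ → E) :
    Integrable f (diskMeas α) ↔ IntegrableOn (fun z => wt α z • f z) unitDisc := by
  unfold diskMeas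
  rw [integrable_withDensity_iff_integrable_smul' (measurable_wt α).ennreal_ofReal
    (Filter.Eventually.of_forall fun _ => ENNReal.ofReal_lt_top)]
  refine integrableOn_congr_fun (fun z hz => ?_) measurableSet_unitDisc
  simp only [ENNReal.toReal_ofReal (wt_nonneg hα hz)]

/-- `dA_α` is invariant under rotations. -/
lemma integral_rot {α : ℝ} (hα : -1 < α) {ζ : ℂ} (hζ : ‖ζ‖ = 1) (f : ℂ → E) :
    ∫ z, f (ζ * z) ∂(diskMeas α) = ∫ z, f z ∂(diskMeas α) := by
  rw [integral_diskMeas hα, integral_diskMeas hα]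
  let c : Circle := ⟨ζ, mem_sphere_zero_iff_norm.2 hζ⟩
  have h := (rotation c).measurePreserving.setIntegral_preimage_emb
    (rotation c).toHomeomorph.measurableEmbedding (fun z => wt α z • f z) unitDisc
  rw [← h]
  have e : (rotation c) ⁻¹' unitDisc = unitDisc := by
    ext z; simp [mem_unitDisc, c]
  rw [e]
  refine setIntegral_congr_fun measurableSet_unitDisc fun z hz => ?_
  have e2 : rotation c z = ζ * z := rfl
  simp only [e2, wt, norm_mul, hζ, one_mul]

lemma integrable_rot {α : ℝ} (hα : -1 < α) {ζ : ℂ} (hζ : ‖ζ‖ = 1) {f : ℂ → E}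
    (hf : Integrable f (diskMeas α)) : Integrable (fun z => f (ζ * z)) (diskMeas α) := by
  rw [integrable_diskMeas hα] at hf ⊢
  let c : Circle := ⟨ζ, mem_sphere_zero_iff_norm.2 hζ⟩
  have h := ((rotation c).measurePreserving.integrableOn_comp_preimage
    (rotation c).toHomeomorph.measurableEmbedding).2 hf
  have e : (rotation c) ⁻¹' unitDisc = unitDisc := by
    ext z; simp [mem_unitDisc, c]
  rw [e] at h
  refine h.congr_fun (fun z hz => ?_) measurableSet_unitDisc
  have e2 : rotation c z = ζ * z := rfl
  simp only [Function.comp, e2, wt, norm_mul, hζ, one_mul]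

end

lemma ae_mem_unitDisc (α : ℝ) : ∀ᵐ z ∂(diskMeas α), z ∈ unitDisc := by
  unfold diskMeas
  exact (withDensity_absolutelyContinuous _ _).ae_le (ae_restrict_mem measurableSet_unitDisc)

lemma hasDerivAt_radial {α : ℝ} (hα : -1 < α) {y : ℝ} (hy : y ∈ Ioo (0:ℝ) 1) :
    HasDerivAt (fun y : ℝ => -(1 - y ^ 2) ^ (α + 1) / (2 * (α + 1))) (y * (1 - y ^ 2) ^ α) y := by
  have h0 : 0 < 1 - y ^ 2 := by nlinarith [hy.1, hy.2]
  have h1 : HasDerivAt (fun y : ℝ => 1 - y ^ 2) (-(2 * y)) y := by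
    simpa using ((hasDerivAt_id y).pow 2).const_sub 1
  have h2 := ((h1.rpow_const (p := α + 1) (Or.inl h0.ne')).neg).div_const (2 * (α + 1))
  refine h2.congr_deriv ?_
  have : α + 1 ≠ 0 := by linarith
  field_simp
  ring_nf

lemma radial_cont {α : ℝ} (hα : -1 < α) :
    ContinuousOn (fun y : ℝ => -(1 - y ^ 2) ^ (α + 1) / (2 * (α + 1))) (Icc 0 1) := by
  apply Continuous.continuousOn
  refine Continuous.div_const (Continuous.neg ?_) _
  exact Continuous.rpow_const (by fun_prop) (fun _ => Or.inr (by linarith))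

lemma radial_integrable {α : ℝ} (hα : -1 < α) :
    IntervalIntegrable (fun y : ℝ => y * (1 - y ^ 2) ^ α) volume 0 1 := by
  rw [intervalIntegrable_iff_integrableOn_Ioc_of_le zero_le_one]
  refine intervalIntegral.integrableOn_deriv_of_nonneg (radial_cont hα)
    (fun y hy => hasDerivAt_radial hα hy) (fun y hy => ?_)
  have h0 : 0 < 1 - y ^ 2 := by nlinarith [hy.1, hy.2]
  have := hy.1
  positivity

/-- `dA_α` has total mass one; this is where the normalisation `(α+1)/π` enters. -/
lemma isProbabilityMeasure_diskMeas {α : ℝ} (hα : -1 < α) :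
    IsProbabilityMeasure (diskMeas α) := by
  have hint : IntegrableOn (fun z => wt α z) unitDisc := by
    refine (integrableOn_fun_norm_addHaar (volume : Measure ℂ)
      (f := fun y => (α + 1) / Real.pi * (1 - y ^ 2) ^ α)).2 ?_
    have h := (radial_integrable hα).const_mul ((α + 1) / Real.pi)
    rw [intervalIntegrable_iff_integrableOn_Ioo_of_le zero_le_one] at h
    refine h.congr_fun (fun y _ => ?_) measurableSet_Ioo
    simp [Complex.finrank_real_complex]; ring
  have hval : ∫ z in unitDisc, wt α z = 1 := by
    have h1 : ∫ z in unitDisc, wt α z = ∫ z : ℂ,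
        (fun y => (Iio (1:ℝ)).indicator (fun y => (α + 1) / Real.pi * (1 - y ^ 2) ^ α) y) ‖z‖ := by
      rw [← integral_indicator measurableSet_unitDisc]
      congr 1
      ext z
      by_cases hz : z ∈ unitDisc
      · have hz' := mem_unitDisc.1 hz
        simp [hz, hz', wt]
      · have hz' : ¬ ‖z‖ < 1 := fun h => hz (mem_unitDisc.2 h)
        simp [hz, hz']
    have h2 : ∫ y in Ioi (0:ℝ), y ^ (Module.finrank ℝ ℂ - 1) •
        (Iio (1:ℝ)).indicator (fun y => (α + 1) / Real.pi * (1 - y ^ 2) ^ α) y =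
        (α + 1) / Real.pi * ∫ y in (0:ℝ)..1, y * (1 - y ^ 2) ^ α := by
      rw [intervalIntegral.integral_of_le zero_le_one, integral_Ioc_eq_integral_Ioo,
        ← integral_const_mul, ← integral_indicator measurableSet_Ioi,
        ← integral_indicator measurableSet_Ioo]
      congr 1
      ext y
      by_cases h0 : 0 < y <;> by_cases h1 : y < 1 <;>
        simp [h0, h1, Set.indicator, Complex.finrank_real_complex]
      ring
    have h3 : ∫ y in (0:ℝ)..1, y * (1 - y ^ 2) ^ α = 1 / (2 * (α + 1)) := by
      rw [intervalIntegral.integral_eq_sub_of_hasDerivAt_of_le zero_le_one (radial_cont hα)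
        (fun y hy => hasDerivAt_radial hα hy) (radial_integrable hα)]
      have h5 : α + 1 ≠ 0 := by linarith
      simp [Real.zero_rpow h5]
      field_simp
    have h4 : (volume : Measure ℂ).real (ball 0 1) = Real.pi := by
      simp [Measure.real, Complex.volume_ball]
    have h5 : α + 1 ≠ 0 := by linarith
    rw [h1, integral_fun_norm_addHaar, h2, h3, h4, Complex.finrank_real_complex]
    simp
    field_simp
  constructor
  unfold diskMeas
  rw [withDensity_apply _ MeasurableSet.univ, Measure.restrict_univ,
    ← ofReal_integral_eq_lintegral_ofReal hint
      ((ae_restrict_iff' measurableSet_unitDisc).2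
        (Filter.Eventually.of_forall fun z hz => wt_nonneg hα hz)), hval, ENNReal.ofReal_one]

/-! ### Dilations of holomorphic functions -/

/-- Hölder's inequality, phrased with integrals of powers of norms. -/
lemma holder_integral {X : Type*} [MeasurableSpace X] {μ : Measure X} {p q : ℝ}
    (hpq : p.HolderConjugate q) {f h : X → ℂ} (hf : AEStronglyMeasurable f μ)
    (hh : AEStronglyMeasurable h μ) (hfp : Integrable (fun z => ‖f z‖ ^ p) μ)
    (hhq : Integrable (fun z => ‖h z‖ ^ q) μ) :
    Integrable (fun z => f z * h z) μ ∧
      ‖∫ z, f z * h z ∂μ‖ ≤ (∫ z, ‖f z‖ ^ p ∂μ) ^ (1 / p) * (∫ z, ‖h z‖ ^ q ∂μ) ^ (1 / q) := by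
  have hp : ENNReal.ofReal p ≠ 0 := by simpa using hpq.pos
  have hq : ENNReal.ofReal q ≠ 0 := by simpa using hpq.symm.pos
  have mf : MemLp f (ENNReal.ofReal p) μ := by
    rw [← integrable_norm_rpow_iff hf hp ENNReal.ofReal_ne_top,
      ENNReal.toReal_ofReal hpq.pos.le]
    exact hfp
  have mh : MemLp h (ENNReal.ofReal q) μ := by
    rw [← integrable_norm_rpow_iff hh hq ENNReal.ofReal_ne_top,
      ENNReal.toReal_ofReal hpq.symm.pos.le]
    exact hhq
  have : ENNReal.HolderConjugate (ENNReal.ofReal p) (ENNReal.ofReal q) := hpq.ennrealOfReal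
  refine ⟨MemLp.integrable_mul mf mh, ?_⟩
  refine (norm_integral_le_integral_norm _).trans ?_
  simp only [norm_mul]
  exact integral_mul_norm_le_Lp_mul_Lq hpq mf mh

lemma integrable_norm_rpow_sub {X : Type*} [MeasurableSpace X] {μ : Measure X} {p : ℝ}
    (hp : 0 < p) {f h : X → ℂ} (hf : AEStronglyMeasurable f μ)
    (hh : AEStronglyMeasurable h μ) (hfp : Integrable (fun z => ‖f z‖ ^ p) μ)
    (hhq : Integrable (fun z => ‖h z‖ ^ p) μ) :
    Integrable (fun z => ‖f z - h z‖ ^ p) μ := by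
  have hp0 : ENNReal.ofReal p ≠ 0 := by simpa using hp
  have key : ∀ g : X → ℂ, AEStronglyMeasurable g μ →
      (Integrable (fun z => ‖g z‖ ^ p) μ ↔ MemLp g (ENNReal.ofReal p) μ) := fun g hg => by
    rw [← integrable_norm_rpow_iff hg hp0 ENNReal.ofReal_ne_top, ENNReal.toReal_ofReal hp.le]
  exact (key _ (hf.sub hh)).2 (((key f hf).1 hfp).sub ((key h hh).1 hhq))

lemma aesm_of_differentiableOn {α : ℝ} {f : ℂ → ℂ} (hf : DifferentiableOn ℂ f unitDisc) :
    AEStronglyMeasurable f (diskMeas α) :=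
  (hf.continuousOn.aestronglyMeasurable measurableSet_unitDisc).mono_ac
    (withDensity_absolutelyContinuous _ _)

lemma mul_mem_unitDisc {ζ z : ℂ} (hζ : ‖ζ‖ ≤ 1) (hz : z ∈ unitDisc) : ζ * z ∈ unitDisc := by
  rw [mem_unitDisc] at *
  rw [norm_mul]
  nlinarith [norm_nonneg z]

lemma differentiableOn_dilate {f : ℂ → ℂ} (hf : DifferentiableOn ℂ f unitDisc) {ζ : ℂ}
    (hζ : ‖ζ‖ ≤ 1) : DifferentiableOn ℂ (fun z => f (ζ * z)) unitDisc :=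
  hf.comp (by fun_prop) (fun _ hz => mul_mem_unitDisc hζ hz)

lemma bounded_of_continuousOn {f : ℂ → ℂ} (hf : ContinuousOn f unitDisc) {ρ : ℝ} (hρ : ρ < 1) :
    ∃ C, ∀ w, ‖w‖ ≤ ρ → ‖f w‖ ≤ C := by
  have hsub : closedBall (0:ℂ) ρ ⊆ unitDisc := closedBall_subset_ball hρ
  obtain ⟨C, hC⟩ := (isCompact_closedBall (0:ℂ) ρ).exists_bound_of_continuousOn (hf.mono hsub)
  exact ⟨C, fun w hw => hC w (by simpa using hw)⟩

/-- Integrals of a dilated holomorphic function over a smaller disc depend holomorphically on the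
complex dilation parameter `ζ` and continuously up to `|ζ| = 1`. -/
lemma diffContOnCl_dilate {α : ℝ} {f h : ℂ → ℂ}
    (hf : DifferentiableOn ℂ f unitDisc) (hh : Integrable h (diskMeas α)) {ρ : ℝ}
    (hρ : ρ < 1) :
    DiffContOnCl ℂ (fun ζ : ℂ => ∫ z in closedBall (0:ℂ) ρ, f (ζ * z) * h z ∂(diskMeas α))
      (ball 0 1) := by
  obtain ⟨C, hC⟩ := bounded_of_continuousOn hf.continuousOn hρ
  obtain ⟨D, hD⟩ := bounded_of_continuousOn (hf.deriv isOpen_ball).continuousOn hρ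
  have hmeas : ∀ ζ : ℂ, ‖ζ‖ ≤ 1 → AEStronglyMeasurable (fun z => f (ζ * z) * h z)
      ((diskMeas α).restrict (closedBall (0:ℂ) ρ)) := fun ζ hζ =>
    ((aesm_of_differentiableOn (differentiableOn_dilate hf hζ)).mul
      hh.aestronglyMeasurable).restrict
  have hsub : ∀ ζ z : ℂ, ‖ζ‖ ≤ 1 → ‖z‖ ≤ ρ → ‖ζ * z‖ ≤ ρ := fun ζ z h1 h2 => by
    rw [norm_mul]; nlinarith [norm_nonneg z]
  have hmem : ∀ᵐ z ∂((diskMeas α).restrict (closedBall (0:ℂ) ρ)), ‖z‖ ≤ ρ := by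
    filter_upwards [ae_restrict_mem measurableSet_closedBall] with z hz
    simpa using hz
  refine ⟨fun ζ hζ => ?_, ?_⟩
  · have hζ1 : ‖ζ‖ < 1 := by simpa using hζ
    have hd := hasDerivAt_integral_of_dominated_loc_of_deriv_le
      (μ := (diskMeas α).restrict (closedBall (0:ℂ) ρ))
      (F := fun ζ z => f (ζ * z) * h z) (F' := fun ζ z => deriv f (ζ * z) * z * h z)
      (bound := fun z => D * ‖h z‖) (isOpen_ball.mem_nhds hζ) ?_ ?_ ?_ ?_ ?_ ?_
    · exact hd.2.differentiableAt.differentiableWithinAt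
    · filter_upwards [isOpen_ball.mem_nhds hζ] with w hw
      exact hmeas w (by simpa using (mem_ball_zero_iff.1 hw).le)
    · refine Integrable.mono' (hh.norm.restrict.const_mul C) (hmeas ζ hζ1.le) ?_
      filter_upwards [hmem] with z hz
      rw [norm_mul]
      exact mul_le_mul_of_nonneg_right (hC _ (hsub _ _ hζ1.le hz)) (norm_nonneg _)
    · refine AEStronglyMeasurable.restrict ?_
      refine ((AEStronglyMeasurable.mul ?_ ?_).mul hh.aestronglyMeasurable)
      · exact aesm_of_differentiableOn (differentiableOn_dilate (hf.deriv isOpen_ball) hζ1.le)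
      · exact aestronglyMeasurable_id
    · filter_upwards [hmem] with z hz w hw
      have hw1 : ‖w‖ ≤ 1 := by simpa using (mem_ball_zero_iff.1 hw).le
      rw [norm_mul, norm_mul]
      refine mul_le_mul_of_nonneg_right ?_ (norm_nonneg _)
      have := hD _ (hsub _ _ hw1 hz)
      have := norm_nonneg (deriv f (w * z))
      nlinarith [norm_nonneg z]
    · exact hh.norm.restrict.const_mul D
    · filter_upwards [hmem] with z hz w hw
      have hw1 : ‖w‖ ≤ 1 := by simpa using (mem_ball_zero_iff.1 hw).le
      have hwz : w * z ∈ unitDisc := mem_unitDisc.2 ((hsub _ _ hw1 hz).trans_lt hρ)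
      have h1 := (hf.differentiableAt (isOpen_ball.mem_nhds hwz)).hasDerivAt
      have h2 : HasDerivAt (fun w : ℂ => w * z) z w := by
        simpa using (hasDerivAt_id w).mul_const z
      exact (h1.comp w h2).mul_const _
  · rw [closure_ball (0:ℂ) one_ne_zero]
    refine continuousOn_of_dominated (bound := fun z => C * ‖h z‖) (fun ζ hζ => ?_)
      (fun ζ hζ => ?_) (hh.norm.restrict.const_mul C) ?_
    · exact hmeas ζ (by simpa using hζ)
    · filter_upwards [hmem] with z hz
      rw [norm_mul]
      exact mul_le_mul_of_nonneg_right (hC _ (hsub _ _ (by simpa using hζ) hz)) (norm_nonneg _)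
    · filter_upwards [hmem] with z hz
      refine ContinuousOn.mul (hf.continuousOn.comp (by fun_prop) fun w hw => ?_)
        continuousOn_const
      exact mem_unitDisc.2 ((hsub _ _ (by simpa using hw) hz).trans_lt hρ)

/-- An exhaustion of the unit disc by smaller closed discs. -/
def smallDisc (n : ℕ) : Set ℂ := closedBall (0:ℂ) (1 - 1 / ((n:ℝ) + 1))

lemma measurableSet_smallDisc (n : ℕ) : MeasurableSet (smallDisc n) := measurableSet_closedBall

lemma smallDisc_radius_lt (n : ℕ) : 1 - 1 / ((n:ℝ) + 1) < 1 := by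
  have : 0 < 1 / ((n:ℝ) + 1) := by positivity
  linarith

lemma monotone_smallDisc : Monotone smallDisc := by
  intro m n hmn
  refine closedBall_subset_closedBall ?_
  have : (m:ℝ) ≤ n := by exact_mod_cast hmn
  gcongr

lemma iUnion_smallDisc : ⋃ n, smallDisc n = unitDisc := by
  ext z
  simp only [mem_iUnion, smallDisc, mem_closedBall_zero_iff, mem_unitDisc]
  constructor
  · rintro ⟨n, hn⟩
    exact hn.trans_lt (smallDisc_radius_lt n)
  · intro hz
    obtain ⟨n, hn⟩ := exists_nat_one_div_lt (by linarith : 0 < 1 - ‖z‖)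
    exact ⟨n, by linarith⟩

lemma tendsto_integral_smallDisc {α : ℝ} {E : Type*} [NormedAddCommGroup E] [NormedSpace ℝ E]
    {g : ℂ → E} (hg : Integrable g (diskMeas α)) :
    Filter.Tendsto (fun n => ∫ z in smallDisc n, g z ∂(diskMeas α)) Filter.atTop
      (nhds (∫ z, g z ∂(diskMeas α))) := by
  have h := tendsto_setIntegral_of_monotone (μ := diskMeas α) (f := g) measurableSet_smallDisc
    monotone_smallDisc hg.integrableOn
  rw [iUnion_smallDisc, Measure.restrict_eq_self_of_ae_mem (ae_mem_unitDisc α)] at h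
  exact h

/-- The mean value property with respect to `dA_α`: over a smaller disc the integral of `g (ζ z)`
is constant on `|ζ| = 1` by rotation invariance, hence constant in `ζ`; compare `ζ = 0, 1`. -/
lemma integral_eq_apply_zero {α : ℝ} (hα : -1 < α) {g : ℂ → ℂ}
    (hg : DifferentiableOn ℂ g unitDisc) (hgi : Integrable g (diskMeas α)) :
    ∫ z, g z ∂(diskMeas α) = g 0 := by
  have := isProbabilityMeasure_diskMeas hα
  have h1 : Integrable (fun _ : ℂ => (1:ℂ)) (diskMeas α) := integrable_const _
  have key : ∀ n, ∫ z in smallDisc n, g z ∂(diskMeas α) =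
      ∫ z in smallDisc n, g 0 ∂(diskMeas α) := by
    intro n
    have hd := diffContOnCl_dilate hg h1 (smallDisc_radius_lt n)
    have heq := Complex.eqOn_closure_of_eqOn_frontier isBounded_ball hd
      (diffContOnCl_const (c := ∫ z in smallDisc n, g z ∂(diskMeas α))) ?_
    · have h0 := heq (show (0:ℂ) ∈ closure (ball 0 1) from subset_closure (by simp))
      simp only [zero_mul, mul_one] at h0
      exact h0.symm
    · intro ζ hζ
      rw [frontier_ball (0:ℂ) one_ne_zero, mem_sphere_zero_iff_norm] at hζ
      have hr := integral_rot hα hζ ((smallDisc n).indicator g)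
      simp only [mul_one]
      rw [← integral_indicator (measurableSet_smallDisc n), ← hr]
      change ∫ z in smallDisc n, g (ζ * z) ∂(diskMeas α) = _
      rw [← integral_indicator (measurableSet_smallDisc n)]
      congr 1
      ext z
      by_cases hz : z ∈ smallDisc n
      · have : ζ * z ∈ smallDisc n := by simpa [smallDisc, hζ] using hz
        simp [hz, this]
      · have : ζ * z ∉ smallDisc n := by simpa [smallDisc, hζ] using hz
        simp [hz, this]
  have t1 := tendsto_integral_smallDisc hgi
  have t2 := tendsto_integral_smallDisc (α := α) (integrable_const (g 0))
  simp only [key] at t1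
  rw [tendsto_nhds_unique t1 t2]
  simp

/-- Dilations are contractions of `A^p_α` when tested against `L^q`. On a smaller disc this is the
maximum principle in `ζ`: for `|ζ| = 1` the function `z ↦ f (ζ z)` is a rotation of `f`. -/
lemma norm_integral_dilate_le {α p q : ℝ} (hα : -1 < α) (hpq : p.HolderConjugate q) {f h : ℂ → ℂ}
    (hf : DifferentiableOn ℂ f unitDisc) (hfp : Integrable (fun z => ‖f z‖ ^ p) (diskMeas α))
    (hh : AEStronglyMeasurable h (diskMeas α))
    (hhq : Integrable (fun z => ‖h z‖ ^ q) (diskMeas α)) {r : ℝ} (hr0 : 0 ≤ r) (hr1 : r < 1) :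
    Integrable (fun z => f (r * z) * h z) (diskMeas α) ∧
    ‖∫ z, f (r * z) * h z ∂(diskMeas α)‖ ≤
      (∫ z, ‖f z‖ ^ p ∂(diskMeas α)) ^ (1 / p) * (∫ z, ‖h z‖ ^ q ∂(diskMeas α)) ^ (1 / q) := by
  have := isProbabilityMeasure_diskMeas hα
  have hrn : ‖(r:ℂ)‖ = r := by simp [abs_of_nonneg hr0]
  have hh1 : Integrable h (diskMeas α) := by
    have := (holder_integral hpq (f := fun _ => 1) (aestronglyMeasurable_const (μ := diskMeas α)) hh
      (by simp) hhq).1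
    simpa using this
  have hint : Integrable (fun z => f (r * z) * h z) (diskMeas α) := by
    obtain ⟨C, hC⟩ := bounded_of_continuousOn hf.continuousOn hr1
    refine Integrable.mono' (hh1.norm.const_mul C) ((aesm_of_differentiableOn
      (differentiableOn_dilate hf (hrn.trans_le hr1.le))).mul hh) ?_
    filter_upwards [ae_mem_unitDisc α] with z hz
    rw [mem_unitDisc] at hz
    rw [norm_mul]
    refine mul_le_mul_of_nonneg_right (hC _ ?_) (norm_nonneg _)
    rw [norm_mul, hrn]; nlinarith
  refine ⟨hint, ?_⟩
  refine le_of_tendsto (tendsto_integral_smallDisc hint).norm (Filter.Eventually.of_forall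
    fun n => ?_)
  refine Complex.norm_le_of_forall_mem_frontier_norm_le isBounded_ball
    (diffContOnCl_dilate hf hh1 (smallDisc_radius_lt n)) (fun ζ hζ => ?_)
    (subset_closure (show (r:ℂ) ∈ ball 0 1 by simpa [abs_of_nonneg hr0] using hr1))
  rw [frontier_ball (0:ℂ) one_ne_zero, mem_sphere_zero_iff_norm] at hζ
  have hi : Integrable (fun z => ‖f (ζ * z)‖ ^ p) (diskMeas α) := integrable_rot hα hζ hfp
  refine (holder_integral hpq (aesm_of_differentiableOn
    (differentiableOn_dilate hf hζ.le)).restrict hh.restrict hi.restrict hhq.restrict).2.trans ?_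
  rw [← integral_rot hα hζ (fun z => ‖f z‖ ^ p)]
  have n1 : ∀ z, 0 ≤ ‖f (ζ * z)‖ ^ p := fun z => by positivity
  have n2 : ∀ z, 0 ≤ ‖h z‖ ^ q := fun z => by positivity
  have hp := hpq.pos
  have hq := hpq.symm.pos
  have m1 := setIntegral_le_integral (s := closedBall (0:ℂ) (1 - 1 / ((n:ℝ) + 1))) hi
    (Filter.Eventually.of_forall n1)
  have m2 := setIntegral_le_integral (s := closedBall (0:ℂ) (1 - 1 / ((n:ℝ) + 1))) hhq
    (Filter.Eventually.of_forall n2)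
  exact mul_le_mul
    (Real.rpow_le_rpow (integral_nonneg n1) m1 (by positivity))
    (Real.rpow_le_rpow (integral_nonneg n2) m2 (by positivity))
    (Real.rpow_nonneg (integral_nonneg n2) _)
    (Real.rpow_nonneg (integral_nonneg n1) _)

/-- `f (r z) → f z` weakly in `L^p(dA_α)` as `r → 1`: on a small disc the convergence is uniform,
and the remaining annulus is controlled by `norm_integral_dilate_le`. -/
lemma tendsto_integral_dilate {α p q : ℝ} (hα : -1 < α) (hpq : p.HolderConjugate q) {f h : ℂ → ℂ}
    (hf : DifferentiableOn ℂ f unitDisc) (hfp : Integrable (fun z => ‖f z‖ ^ p) (diskMeas α))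
    (hh : AEStronglyMeasurable h (diskMeas α))
    (hhq : Integrable (fun z => ‖h z‖ ^ q) (diskMeas α)) :
    Filter.Tendsto (fun r : ℝ => ∫ z, f (r * z) * h z ∂(diskMeas α)) (nhdsWithin 1 (Ioo 0 1))
      (nhds (∫ z, f z * h z ∂(diskMeas α))) := by
  have := isProbabilityMeasure_diskMeas hα
  have hh1 : Integrable h (diskMeas α) := by
    have := (holder_integral hpq (f := fun _ => 1) (aestronglyMeasurable_const (μ := diskMeas α)) hh
      (by simp) hhq).1
    simpa using this
  set N := (∫ z, ‖f z‖ ^ p ∂(diskMeas α)) ^ (1 / p) with hN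
  have htail : Filter.Tendsto (fun n => N * (∫ z in (smallDisc n)ᶜ, ‖h z‖ ^ q ∂(diskMeas α)) ^ (1/q))
      Filter.atTop (nhds 0) := by
    have h1 : Filter.Tendsto (fun n => ∫ z in (smallDisc n)ᶜ, ‖h z‖ ^ q ∂(diskMeas α))
        Filter.atTop (nhds 0) := by
      have h2 := (tendsto_integral_smallDisc hhq).const_sub (∫ z, ‖h z‖ ^ q ∂(diskMeas α))
      rw [sub_self] at h2
      refine h2.congr fun n => ?_
      rw [← integral_add_compl (measurableSet_smallDisc n) hhq]; ring
    have h3 := (h1.rpow_const (p := 1 / q) (Or.inr (by have := hpq.symm.pos; positivity))).const_mul N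
    rwa [Real.zero_rpow (by have := hpq.symm.pos; positivity), mul_zero] at h3
  rw [Metric.tendsto_nhds]
  intro ε hε
  obtain ⟨n, hn⟩ := (htail.eventually (gt_mem_nhds (by positivity : 0 < ε / 3))).exists
  set B := smallDisc n with hB
  have hBm : MeasurableSet B := measurableSet_smallDisc n
  have hcont : Filter.Tendsto (fun r : ℝ => ∫ z in B, f (r * z) * h z ∂(diskMeas α))
      (nhdsWithin 1 (Ioo 0 1)) (nhds (∫ z in B, f z * h z ∂(diskMeas α))) := by
    have hc := (diffContOnCl_dilate hf hh1 (smallDisc_radius_lt n)).continuousOn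
    rw [closure_ball (0:ℂ) one_ne_zero] at hc
    have h1 := hc 1 (by simp)
    have h2 : Filter.Tendsto (fun r : ℝ => (r:ℂ)) (nhdsWithin 1 (Ioo 0 1))
        (nhdsWithin 1 (closedBall (0:ℂ) 1)) := by
      refine tendsto_nhdsWithin_iff.2 ⟨?_, ?_⟩
      · exact (Complex.continuous_ofReal.tendsto' 1 1 (by simp)).mono_left nhdsWithin_le_nhds
      · filter_upwards [self_mem_nhdsWithin] with r hr
        simpa [abs_of_pos hr.1] using hr.2.le
    have h3 : Filter.Tendsto (fun r : ℝ => ∫ z in B, f (r * z) * h z ∂(diskMeas α))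
        (nhdsWithin 1 (Ioo 0 1)) (nhds (∫ z in B, f (1 * z) * h z ∂(diskMeas α))) :=
      h1.tendsto.comp h2
    simpa only [one_mul] using h3
  have hq := hpq.symm.pos
  have hc1 : AEStronglyMeasurable (Bᶜ.indicator h) (diskMeas α) := hh.indicator hBm.compl
  have e1 : ∀ z, ‖Bᶜ.indicator h z‖ ^ q = Bᶜ.indicator (fun z => ‖h z‖ ^ q) z := fun z => by
    by_cases hz : z ∈ Bᶜ
    · simp [hz]
    · simp only [Set.indicator_of_notMem hz, norm_zero, Real.zero_rpow hq.ne']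
  have hc2 : Integrable (fun z => ‖Bᶜ.indicator h z‖ ^ q) (diskMeas α) := by
    simp only [e1]; exact hhq.indicator hBm.compl
  have e2 : ∫ z, ‖Bᶜ.indicator h z‖ ^ q ∂(diskMeas α) =
      ∫ z in Bᶜ, ‖h z‖ ^ q ∂(diskMeas α) := by
    simp only [e1]; exact integral_indicator hBm.compl
  have e3 : ∀ g : ℂ → ℂ, ∫ z, g z * Bᶜ.indicator h z ∂(diskMeas α) =
      ∫ z in Bᶜ, g z * h z ∂(diskMeas α) := fun g => by
    rw [← integral_indicator hBm.compl]
    congr 1; ext z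
    by_cases hz : z ∈ Bᶜ
    · simp [hz]
    · simp only [Set.indicator_of_notMem hz, mul_zero]
  filter_upwards [(Metric.tendsto_nhds.1 hcont) (ε / 3) (by positivity), self_mem_nhdsWithin]
    with r hr1 hr2
  have b1 := (norm_integral_dilate_le hα hpq hf hfp hc1 hc2 hr2.1.le hr2.2).2
  have b2 := (holder_integral hpq (aesm_of_differentiableOn hf) hc1 hfp hc2).2
  rw [e2, ← hN, e3] at b1 b2
  have i1 := (norm_integral_dilate_le hα hpq hf hfp hh hhq hr2.1.le hr2.2).1
  have i2 := (holder_integral hpq (aesm_of_differentiableOn hf) hh hfp hhq).1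
  rw [← integral_add_compl hBm i1, ← integral_add_compl hBm i2]
  rw [dist_eq_norm] at hr1 ⊢
  calc _ = ‖((∫ z in B, f (r * z) * h z ∂(diskMeas α)) - ∫ z in B, f z * h z ∂(diskMeas α)) +
        (∫ z in Bᶜ, f (r * z) * h z ∂(diskMeas α)) - ∫ z in Bᶜ, f z * h z ∂(diskMeas α)‖ := by
          congr 1; ring
    _ ≤ _ := (norm_sub_le _ _).trans (add_le_add_left (norm_add_le _ _) _)
    _ < ε := by linarith

/-! ### The reproducing property -/

/-- The involutive automorphism of the disc exchanging `0` and `a`. -/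
def invol (a z : ℂ) : ℂ := (a - z) / (1 - (starRingEnd ℂ) a * z)

lemma re_one_sub_pos {a z : ℂ} (ha : ‖a‖ < 1) (hz : ‖z‖ < 1) :
    0 < (1 - (starRingEnd ℂ) a * z).re := by
  have h1 : ((starRingEnd ℂ) a * z).re ≤ ‖a‖ * ‖z‖ := by
    refine (Complex.re_le_norm _).trans ?_
    rw [norm_mul, Complex.norm_conj]
  have h2 : ‖a‖ * ‖z‖ < 1 := by nlinarith [norm_nonneg a, norm_nonneg z]
  rw [Complex.sub_re, Complex.one_re]; linarith

lemma one_sub_ne_zero' {a z : ℂ} (ha : ‖a‖ < 1) (hz : ‖z‖ < 1) :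
    1 - (starRingEnd ℂ) a * z ≠ 0 := fun h => by
  have := re_one_sub_pos ha hz
  rw [h] at this; simp at this

lemma one_sub_norm_invol {a z : ℂ} (ha : ‖a‖ < 1) (hz : ‖z‖ < 1) :
    1 - ‖invol a z‖ ^ 2 =
      (1 - ‖a‖ ^ 2) * (1 - ‖z‖ ^ 2) / ‖1 - (starRingEnd ℂ) a * z‖ ^ 2 := by
  have h : ‖1 - (starRingEnd ℂ) a * z‖ ≠ 0 := by simpa using one_sub_ne_zero' ha hz
  have e : ‖1 - (starRingEnd ℂ) a * z‖ ^ 2 - ‖a - z‖ ^ 2 = (1 - ‖a‖ ^ 2) * (1 - ‖z‖ ^ 2) := by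
    simp only [Complex.sq_norm, Complex.normSq_apply]
    simp; ring
  rw [invol, norm_div, div_pow, one_sub_div (pow_ne_zero 2 h), e]

lemma norm_invol_lt {a z : ℂ} (ha : ‖a‖ < 1) (hz : ‖z‖ < 1) : ‖invol a z‖ < 1 := by
  have h := one_sub_norm_invol ha hz
  have h' : 0 < ‖1 - (starRingEnd ℂ) a * z‖ := by simpa using one_sub_ne_zero' ha hz
  have h1 : 0 < 1 - ‖a‖ ^ 2 := by nlinarith [norm_nonneg a]
  have h2 : 0 < 1 - ‖z‖ ^ 2 := by nlinarith [norm_nonneg z]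
  have h3 : 0 < 1 - ‖invol a z‖ ^ 2 := by rw [h]; positivity
  nlinarith [norm_nonneg (invol a z)]

lemma ofReal_one_sub_norm (a : ℂ) :
    ((1 - ‖a‖ ^ 2 : ℝ) : ℂ) = 1 - (starRingEnd ℂ) a * a := by
  rw [Complex.conj_mul']; push_cast; rfl

lemma one_sub_mul_invol {a z : ℂ} (ha : ‖a‖ < 1) (hz : ‖z‖ < 1) :
    1 - (starRingEnd ℂ) a * invol a z =
      ((1 - ‖a‖ ^ 2 : ℝ) : ℂ) * (1 - (starRingEnd ℂ) a * z)⁻¹ := by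
  have h := one_sub_ne_zero' ha hz
  rw [ofReal_one_sub_norm, invol]
  field_simp
  ring

lemma invol_invol {a z : ℂ} (ha : ‖a‖ < 1) (hz : ‖z‖ < 1) : invol a (invol a z) = z := by
  have h := one_sub_ne_zero' ha hz
  have h3 : (1 - (starRingEnd ℂ) a * a) ≠ 0 := one_sub_ne_zero' ha ha
  have e : a - invol a z = z * ((1 - (starRingEnd ℂ) a * a) * (1 - (starRingEnd ℂ) a * z)⁻¹) := by
    rw [invol, ← div_eq_mul_inv, ← mul_div_assoc, eq_div_iff h, sub_mul, div_mul_cancel₀ _ h]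
    ring
  rw [invol, one_sub_mul_invol ha hz, ofReal_one_sub_norm, e,
    mul_div_cancel_right₀ _ (mul_ne_zero h3 (inv_ne_zero h))]

lemma hasDerivAt_invol {a z : ℂ} (ha : ‖a‖ < 1) (hz : ‖z‖ < 1) :
    HasDerivAt (invol a) (-((1 - ‖a‖ ^ 2 : ℝ) : ℂ) / (1 - (starRingEnd ℂ) a * z) ^ 2) z := by
  have h := one_sub_ne_zero' ha hz
  have h1 : HasDerivAt (fun z => a - z) (-1) z := (hasDerivAt_id z).const_sub a
  have h2 : HasDerivAt (fun z => 1 - (starRingEnd ℂ) a * z) (-(starRingEnd ℂ) a) z := by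
    simpa using ((hasDerivAt_id z).const_mul ((starRingEnd ℂ) a)).const_sub 1
  refine (h1.div h2 h).congr_deriv ?_
  rw [ofReal_one_sub_norm]
  ring

lemma image_invol {a : ℂ} (ha : ‖a‖ < 1) : invol a '' unitDisc = unitDisc := by
  ext z
  constructor
  · rintro ⟨w, hw, rfl⟩
    exact mem_unitDisc.2 (norm_invol_lt ha (mem_unitDisc.1 hw))
  · intro hz
    rw [mem_unitDisc] at hz
    exact ⟨invol a z, mem_unitDisc.2 (norm_invol_lt ha hz), invol_invol ha hz⟩

lemma injOn_invol {a : ℂ} (ha : ‖a‖ < 1) : InjOn (invol a) unitDisc := fun z hz w hw h => by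
  rw [mem_unitDisc] at hz hw
  rw [← invol_invol ha hz, h, invol_invol ha hw]

lemma arg_ne_pi_of_re_pos {v : ℂ} (hv : 0 < v.re) : v.arg ≠ Real.pi := fun h => by
  rw [Complex.arg_eq_pi_iff] at h; linarith [h.1]

/-- A bound for the Bergman kernel, with `b` the product of one argument and the conjugate of the
other. -/
lemma norm_kernel_le {α ρ : ℝ} (hα : -1 < α) (hρ : ρ < 1) {b : ℂ} (hb : ‖b‖ ≤ ρ) :
    ‖((1 - b) ^ ((2:ℂ) + (α:ℂ)))⁻¹‖ ≤ ((1 - ρ) ^ (2 + α))⁻¹ := by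
  have es : (2:ℂ) + (α:ℂ) = ((2 + α : ℝ) : ℂ) := by push_cast; rfl
  have h1 : 1 - ρ ≤ ‖1 - b‖ := by
    have := norm_sub_norm_le (1:ℂ) b
    rw [norm_one] at this
    linarith
  have h0 : 0 < 1 - ρ := by linarith
  rw [es, norm_inv, Complex.norm_cpow_real]
  gcongr
  linarith

/-- The integrand to which the mean value property is applied in order to reproduce `f a`. -/
def mobiusPull (α : ℝ) (a : ℂ) (f : ℂ → ℂ) (u : ℂ) : ℂ :=
  f (invol a u) / (1 - (starRingEnd ℂ) a * u) ^ ((2:ℂ) + (α:ℂ))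

/-- Under the substitution `u = invol a z`, `mobiusPull f dA_α` becomes `f` times the conjugate
Bergman kernel at `a`. -/
lemma mobiusPull_invol {α : ℝ} {a z : ℂ} (ha : ‖a‖ < 1) (hz : ‖z‖ < 1) (f : ℂ → ℂ) :
    ‖-((1 - ‖a‖ ^ 2 : ℝ) : ℂ) / (1 - (starRingEnd ℂ) a * z) ^ 2‖ ^ 2 •
      (wt α (invol a z) • mobiusPull α a f (invol a z)) =
    wt α z • (f z / (1 - a * (starRingEnd ℂ) z) ^ ((2:ℂ) + (α:ℂ))) := by
  have hv := one_sub_ne_zero' ha hz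
  have hre := re_one_sub_pos ha hz
  have hT : 0 < 1 - ‖a‖ ^ 2 := by nlinarith [norm_nonneg a]
  have hw : 0 < 1 - ‖z‖ ^ 2 := by nlinarith [norm_nonneg z]
  have hconj : 1 - a * (starRingEnd ℂ) z = (starRingEnd ℂ) (1 - (starRingEnd ℂ) a * z) := by simp
  have e1 := one_sub_mul_invol ha hz
  rw [mobiusPull, invol_invol ha hz, e1, wt, one_sub_norm_invol ha hz, wt, hconj]
  set T := 1 - ‖a‖ ^ 2 with hTdef
  set v := 1 - (starRingEnd ℂ) a * z with hvdef
  set w := 1 - ‖z‖ ^ 2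
  have hN : 0 < ‖v‖ := by simpa using hv
  have es : (2:ℂ) + (α:ℂ) = ((2 + α : ℝ) : ℂ) := by push_cast; rfl
  rw [es]
  set s := 2 + α with hs
  -- Principal powers split here because `T > 0` and `v` lies in the right half-plane.
  have e2 : ((T:ℂ) * v⁻¹) ^ (s:ℂ) = ((T ^ s : ℝ) : ℂ) * (v ^ (s:ℂ))⁻¹ := by
    rw [← Complex.inv_cpow _ _ (arg_ne_pi_of_re_pos hre), Complex.ofReal_cpow hT.le,
      Complex.cpow_def_of_ne_zero (mul_ne_zero (by exact_mod_cast hT.ne') (inv_ne_zero hv)),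
      Complex.log_ofReal_mul hT (inv_ne_zero hv), add_mul, Complex.exp_add,
      Complex.cpow_def_of_ne_zero (by exact_mod_cast hT.ne'),
      Complex.cpow_def_of_ne_zero (inv_ne_zero hv), Complex.ofReal_log hT.le]
  have e3 : (starRingEnd ℂ v) ^ (s:ℂ) = starRingEnd ℂ (v ^ (s:ℂ)) := by
    rw [Complex.conj_cpow _ _ (arg_ne_pi_of_re_pos hre), Complex.conj_ofReal]
  have e4 : v ^ (s:ℂ) * starRingEnd ℂ (v ^ (s:ℂ)) = (((‖v‖ ^ s) ^ 2 : ℝ) : ℂ) := by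
    rw [Complex.mul_conj', Complex.norm_cpow_real]; push_cast; rfl
  have hvs : v ^ (s:ℂ) ≠ 0 := by simp [Complex.cpow_eq_zero_iff, hv]
  have hvs' : starRingEnd ℂ (v ^ (s:ℂ)) ≠ 0 := by simpa using hvs
  rw [e2, e3, norm_div, norm_neg, norm_pow, Complex.norm_real, Real.norm_of_nonneg hT.le]
  have e5 : (T / ‖v‖ ^ 2) ^ 2 * ((α + 1) / Real.pi * (T * w / ‖v‖ ^ 2) ^ α) =
      (α + 1) / Real.pi * w ^ α * T ^ s / (‖v‖ ^ s) ^ 2 := by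
    have a1 : T ^ s = T ^ 2 * T ^ α := by rw [hs, Real.rpow_add hT]; norm_num
    have a2 : ‖v‖ ^ s = ‖v‖ ^ 2 * ‖v‖ ^ α := by rw [hs, Real.rpow_add hN]; norm_num
    have a3 : (‖v‖ ^ 2) ^ α = (‖v‖ ^ α) ^ 2 := by
      rw [← Real.rpow_natCast, ← Real.rpow_natCast, ← Real.rpow_mul hN.le, ← Real.rpow_mul hN.le,
        mul_comm]
    rw [Real.div_rpow (by positivity) (by positivity), Real.mul_rpow hT.le hw.le, a1, a2, a3]
    have : ‖v‖ ^ α ≠ 0 := by positivity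
    field_simp
  rw [smul_smul, e5]
  simp only [Complex.real_smul]
  have hTs : ((T ^ s : ℝ) : ℂ) ≠ 0 := by
    have : T ^ s ≠ 0 := by positivity
    exact_mod_cast this
  rw [Complex.ofReal_div, ← e4, Complex.ofReal_mul _ (T ^ s)]
  field_simp

/-- The real Jacobian of multiplication by `c` is `|c|²`. -/
lemma abs_det_smulRight (c : ℂ) :
    |((ContinuousLinearMap.toSpanSingleton ℂ c).restrictScalars ℝ).det| = ‖c‖ ^ 2 := by
  simp [ContinuousLinearMap.det, LinearMap.det_restrictScalars,
      Algebra.norm_complex_eq, Complex.normSq_eq_norm_sq]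

/-- The reproducing property of the Bergman kernel on `A^1_α`: substitute `u = invol a z` in the
mean value property of `mobiusPull α a f`, whose value at `0` is `f a`. -/
lemma reproducing {α : ℝ} (hα : -1 < α) {f : ℂ → ℂ} (hf : DifferentiableOn ℂ f unitDisc)
    (hfi : Integrable f (diskMeas α)) {a : ℂ} (ha : ‖a‖ < 1) :
    ∫ z, f z / (1 - a * (starRingEnd ℂ) z) ^ ((2:ℂ) + (α:ℂ)) ∂(diskMeas α) = f a := by
  have hderiv : ∀ z ∈ unitDisc, HasFDerivWithinAt (invol a)
      ((ContinuousLinearMap.toSpanSingleton ℂ (-((1 - ‖a‖ ^ 2 : ℝ) : ℂ) /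
        (1 - (starRingEnd ℂ) a * z) ^ 2)).restrictScalars ℝ) unitDisc z := fun z hz =>
    ((hasDerivAt_invol ha (mem_unitDisc.1 hz)).hasFDerivAt.restrictScalars ℝ).hasFDerivWithinAt
  set g := mobiusPull α a f with hg
  have hgd : DifferentiableOn ℂ g unitDisc := by
    intro u hu
    have hu' := mem_unitDisc.1 hu
    have h1 : DifferentiableAt ℂ f (invol a u) := hf.differentiableAt
      (isOpen_ball.mem_nhds (mem_unitDisc.2 (norm_invol_lt ha hu')))
    have h2 := h1.comp u (hasDerivAt_invol ha hu').differentiableAt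
    have h3 : DifferentiableAt ℂ
        (fun u => (1 - (starRingEnd ℂ) a * u) ^ ((2:ℂ) + (α:ℂ))) u := by
      refine DifferentiableAt.cpow_const (by fun_prop) (Or.inl (re_one_sub_pos ha hu'))
    refine (h2.div h3 ?_).differentiableWithinAt
    simp [Complex.cpow_eq_zero_iff, one_sub_ne_zero' ha hu']
  have hg0 : g 0 = f a := by simp [hg, mobiusPull, invol]
  have hgi : Integrable g (diskMeas α) := by
    rw [integrable_diskMeas hα]
    nth_rw 1 [← image_invol ha]
    rw [integrableOn_image_iff_integrableOn_abs_det_fderiv_smul volume measurableSet_unitDisc hderiv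
      (injOn_invol ha)]
    have hki : Integrable (fun z => f z / (1 - a * (starRingEnd ℂ) z) ^ ((2:ℂ) + (α:ℂ)))
        (diskMeas α) := by
      simp only [div_eq_mul_inv]
      refine hfi.mul_bdd (c := ((1 - ‖a‖) ^ (2 + α))⁻¹) (Measurable.aestronglyMeasurable (by fun_prop)) ?_
      filter_upwards [ae_mem_unitDisc α] with z hz
      refine norm_kernel_le hα ha ?_
      rw [norm_mul, Complex.norm_conj]
      exact mul_le_of_le_one_right (norm_nonneg a) (mem_unitDisc.1 hz).le
    rw [integrable_diskMeas hα] at hki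
    refine hki.congr_fun (fun z hz => ?_) measurableSet_unitDisc
    simp only [abs_det_smulRight]
    exact (mobiusPull_invol ha (mem_unitDisc.1 hz) f).symm
  rw [← hg0, ← integral_eq_apply_zero hα hgd hgi, integral_diskMeas hα, integral_diskMeas hα]
  nth_rw 2 [← image_invol ha]
  rw [integral_image_eq_integral_abs_det_fderiv_smul volume measurableSet_unitDisc hderiv
      (injOn_invol ha)]
  refine setIntegral_congr_fun measurableSet_unitDisc fun z hz => ?_
  simp only [abs_det_smulRight]
  exact (mobiusPull_invol ha (mem_unitDisc.1 hz) f).symm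

/-! ### The Bergman projection and duality -/

lemma bergmanProj_eq {α : ℝ} (hα : -1 < α) (ψ : ℂ → ℂ) (x : ℂ) :
    bergmanProj α ψ x =
      ∫ w, ψ w / (1 - x * (starRingEnd ℂ) w) ^ ((2:ℂ) + (α:ℂ)) ∂(diskMeas α) := by
  rw [integral_diskMeas hα, bergmanProj]
  simp only [Complex.real_smul, mul_comm]

lemma pairing_eq {α : ℝ} (hα : -1 < α) (f k : ℂ → ℂ) :
    pairing α f k = ∫ z, f z * (starRingEnd ℂ) (k z) ∂(diskMeas α) := by
  rw [integral_diskMeas hα, pairing]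
  simp only [Complex.real_smul, mul_comm]

lemma bNorm_eq {α : ℝ} (hα : -1 < α) (p : ℝ) (f : ℂ → ℂ) :
    bNorm p α f = (∫ z, ‖f z‖ ^ p ∂(diskMeas α)) ^ (1 / p) := by
  rw [integral_diskMeas hα, bNorm]
  simp only [smul_eq_mul, mul_comm]

lemma integrable_of_memAp {p α : ℝ} (hα : -1 < α) {f : ℂ → ℂ} (hf : MemAp p α f) :
    Integrable (fun z => ‖f z‖ ^ p) (diskMeas α) := by
  rw [integrable_diskMeas hα]
  simpa only [smul_eq_mul, mul_comm] using hf.2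

/-- Fubini's theorem and the reproducing property identify the pairing of `f` with a dilate of
`P_α ψ`; the dilation keeps the kernel bounded. -/
lemma integral_mul_conj_bergmanProj_dilate {α : ℝ} (hα : -1 < α) {f ψ : ℂ → ℂ}
    (hf : DifferentiableOn ℂ f unitDisc) (hfi : Integrable f (diskMeas α))
    (hψ : Integrable ψ (diskMeas α)) {r : ℝ} (hr : r ∈ Ioo (0:ℝ) 1) :
    ∫ z, f z * (starRingEnd ℂ) (bergmanProj α ψ (r * z)) ∂(diskMeas α) =
      ∫ w, f (r * w) * (starRingEnd ℂ) (ψ w) ∂(diskMeas α) := by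
  have := isProbabilityMeasure_diskMeas hα
  have hnorm : ∀ {w z : ℂ}, w ∈ unitDisc → z ∈ unitDisc →
      ‖(r * w : ℂ) * (starRingEnd ℂ) z‖ ≤ r := fun {w z} hw hz => by
    rw [mem_unitDisc] at hw hz
    rw [norm_mul, norm_mul, Complex.norm_conj, Complex.norm_real, Real.norm_of_nonneg hr.1.le,
      mul_assoc]
    exact mul_le_of_le_one_right hr.1.le (mul_le_one₀ hw.le (norm_nonneg _) hz.le)
  have hψc : Integrable (fun w => (starRingEnd ℂ) (ψ w)) (diskMeas α) := by
    refine (integrable_norm_iff ?_).1 ?_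
    · exact Complex.continuous_conj.comp_aestronglyMeasurable hψ.aestronglyMeasurable
    · simpa only [Complex.norm_conj] using hψ.norm
  have hint : Integrable (Function.uncurry fun z w : ℂ => f z * (starRingEnd ℂ) (ψ w) *
      ((1 - (r * w : ℂ) * (starRingEnd ℂ) z) ^ ((2:ℂ) + (α:ℂ)))⁻¹)
      ((diskMeas α).prod (diskMeas α)) := by
    refine (hfi.mul_prod hψc).mul_bdd (c := ((1 - r) ^ (2 + α))⁻¹)
      (Measurable.aestronglyMeasurable (by fun_prop)) ?_
    filter_upwards [Measure.quasiMeasurePreserving_fst.ae (ae_mem_unitDisc α),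
      Measure.quasiMeasurePreserving_snd.ae (ae_mem_unitDisc α)] with x hz hw
    exact norm_kernel_le hα hr.2 (hnorm hw hz)
  calc ∫ z, f z * (starRingEnd ℂ) (bergmanProj α ψ (r * z)) ∂(diskMeas α)
      = ∫ z, ∫ w, f z * (starRingEnd ℂ) (ψ w) *
          ((1 - (r * w : ℂ) * (starRingEnd ℂ) z) ^ ((2:ℂ) + (α:ℂ)))⁻¹
            ∂(diskMeas α) ∂(diskMeas α) := by
        refine integral_congr_ae ?_
        filter_upwards [ae_mem_unitDisc α] with z hz
        rw [bergmanProj_eq hα, ← integral_conj, ← integral_const_mul]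
        refine integral_congr_ae ?_
        filter_upwards [ae_mem_unitDisc α] with w hw
        have hre : 0 < (1 - (r * z : ℂ) * (starRingEnd ℂ) w).re := by
          have := (Complex.re_le_norm _).trans (hnorm hz hw)
          rw [Complex.sub_re, Complex.one_re]
          linarith [hr.2]
        have es : (2:ℂ) + (α:ℂ) = ((2 + α : ℝ) : ℂ) := by push_cast; rfl
        have ec : 1 - (r * w : ℂ) * (starRingEnd ℂ) z =
            (starRingEnd ℂ) (1 - (r * z : ℂ) * (starRingEnd ℂ) w) := by
          simp; ring
        rw [map_div₀, ec, es, Complex.conj_cpow _ _ (arg_ne_pi_of_re_pos hre), Complex.conj_ofReal,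
          div_eq_mul_inv, mul_assoc (f z)]
    _ = ∫ w, ∫ z, f z * (starRingEnd ℂ) (ψ w) *
          ((1 - (r * w : ℂ) * (starRingEnd ℂ) z) ^ ((2:ℂ) + (α:ℂ)))⁻¹
            ∂(diskMeas α) ∂(diskMeas α) := integral_integral_swap hint
    _ = ∫ w, f (r * w) * (starRingEnd ℂ) (ψ w) ∂(diskMeas α) := by
        refine integral_congr_ae ?_
        filter_upwards [ae_mem_unitDisc α] with w hw
        have ha : ‖(r * w : ℂ)‖ < 1 := by
          rw [norm_mul, Complex.norm_real, Real.norm_of_nonneg hr.1.le]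
          nlinarith [mem_unitDisc.1 hw, hr.1, hr.2, norm_nonneg w]
        rw [← reproducing hα hf hfi ha, ← integral_mul_const]
        congr 1
        ext z
        rw [div_eq_mul_inv]
        ring

/-- `P_α` is self-adjoint for the pairing of `A^p_α` with `L^q`, provided `P_α ψ ∈ A^q_α`. -/
lemma integral_mul_conj_bergmanProj {p q α : ℝ} (hα : -1 < α) (hpq : p.HolderConjugate q)
    {f ψ : ℂ → ℂ} (hf : DifferentiableOn ℂ f unitDisc)
    (hfp : Integrable (fun z => ‖f z‖ ^ p) (diskMeas α))
    (hψ : AEStronglyMeasurable ψ (diskMeas α))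
    (hψq : Integrable (fun z => ‖ψ z‖ ^ q) (diskMeas α))
    (hK : DifferentiableOn ℂ (bergmanProj α ψ) unitDisc)
    (hKq : Integrable (fun z => ‖bergmanProj α ψ z‖ ^ q) (diskMeas α)) :
    ∫ z, f z * (starRingEnd ℂ) (bergmanProj α ψ z) ∂(diskMeas α) =
      ∫ z, f z * (starRingEnd ℂ) (ψ z) ∂(diskMeas α) := by
  have := isProbabilityMeasure_diskMeas hα
  have hfm := aesm_of_differentiableOn (α := α) hf
  have hcm : ∀ {g : ℂ → ℂ}, AEStronglyMeasurable g (diskMeas α) →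
      AEStronglyMeasurable (fun z => (starRingEnd ℂ) (g z)) (diskMeas α) := fun hg =>
    Complex.continuous_conj.comp_aestronglyMeasurable hg
  have h1 : ∀ t : ℝ, Integrable (fun z : ℂ => ‖(fun _ : ℂ => (1:ℂ)) z‖ ^ t) (diskMeas α) := by simp
  have hfi : Integrable f (diskMeas α) := by
    simpa using (holder_integral hpq hfm (aestronglyMeasurable_const (b := (1:ℂ))) hfp (h1 q)).1
  have hψi : Integrable ψ (diskMeas α) := by
    simpa using (holder_integral hpq (aestronglyMeasurable_const (b := (1:ℂ))) hψ (h1 p) hψq).1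
  have t1 := tendsto_integral_dilate hα hpq hf hfp (hcm hψ)
    (by simpa only [Complex.norm_conj] using hψq)
  have t2 := tendsto_integral_dilate hα hpq.symm hK hKq (hcm hfm)
    (by simpa only [Complex.norm_conj] using hfp)
  have t3 := (Complex.continuous_conj.tendsto _).comp t2
  have hne : (nhdsWithin (1:ℝ) (Ioo 0 1)).NeBot := by
    rw [nhdsWithin_Ioo_eq_nhdsLT zero_lt_one]; infer_instance
  have e : ∀ g : ℂ → ℂ, (starRingEnd ℂ) (∫ z, g z * (starRingEnd ℂ) (f z) ∂(diskMeas α)) =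
      ∫ z, f z * (starRingEnd ℂ) (g z) ∂(diskMeas α) := fun g => by
    rw [← integral_conj]
    simp only [map_mul, Complex.conj_conj, mul_comm]
  rw [e] at t3
  refine tendsto_nhds_unique (t3.congr' ?_) t1
  filter_upwards [self_mem_nhdsWithin] with r hr
  rw [Function.comp, e (fun z => bergmanProj α ψ (r * z))]
  exact integral_mul_conj_bergmanProj_dilate hα hf hfi hψi hr

/-! ### From the gap to the norm -/

lemma integral_eq_one_of_bNorm {p α : ℝ} (hα : -1 < α) (hp : 0 < p) {f : ℂ → ℂ}
    (h : bNorm p α f = 1) : ∫ z, ‖f z‖ ^ p ∂(diskMeas α) = 1 := by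
  rw [bNorm_eq hα] at h
  have h0 : 0 ≤ ∫ z, ‖f z‖ ^ p ∂(diskMeas α) :=
    integral_nonneg fun z => Real.rpow_nonneg (norm_nonneg _) _
  rw [← Real.rpow_inv_rpow h0 hp.ne', ← one_div, h, Real.one_rpow]

lemma aesm_conj {μ : Measure ℂ} {g : ℂ → ℂ} (hg : AEStronglyMeasurable g μ) :
    AEStronglyMeasurable (fun z => (starRingEnd ℂ) (g z)) μ :=
  Complex.continuous_conj.comp_aestronglyMeasurable hg

lemma holder_conj {p q : ℝ} {μ : Measure ℂ} (hpq : p.HolderConjugate q) {f h : ℂ → ℂ}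
    (hf : AEStronglyMeasurable f μ) (hh : AEStronglyMeasurable h μ)
    (hfp : Integrable (fun z => ‖f z‖ ^ p) μ) (hhq : Integrable (fun z => ‖h z‖ ^ q) μ) :
    Integrable (fun z => f z * (starRingEnd ℂ) (h z)) μ ∧
      ‖∫ z, f z * (starRingEnd ℂ) (h z) ∂μ‖ ≤
        (∫ z, ‖f z‖ ^ p ∂μ) ^ (1 / p) * (∫ z, ‖h z‖ ^ q ∂μ) ^ (1 / q) := by
  have := holder_integral hpq hf (aesm_conj hh) hfp (by simpa only [Complex.norm_conj] using hhq)
  simpa only [Complex.norm_conj] using this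

lemma aesm_sgnPow {p : ℝ} {μ : Measure ℂ} {G : ℂ → ℂ} (hG : AEStronglyMeasurable G μ) :
    AEStronglyMeasurable (sgnPow p G) μ := by
  have hm : AEMeasurable G μ := hG.aemeasurable
  have e : sgnPow p G = fun z => ((‖G z‖ ^ (p - 1) : ℝ) : ℂ) * (G z / (‖G z‖ : ℂ)) :=
    funext fun z => sgnPow_eq p G z
  rw [e]
  exact AEMeasurable.aestronglyMeasurable (by fun_prop)

lemma norm_sgnPow_rpow {p q : ℝ} (hpq : p.HolderConjugate q) (G : ℂ → ℂ) (z : ℂ) :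
    ‖sgnPow p G z‖ ^ q = ‖G z‖ ^ p := by
  rw [norm_sgnPow hpq.lt, ← Real.rpow_mul (norm_nonneg _), hpq.sub_one_mul_conj]

/-- Duality turns the closeness of the kernels into smallness of the Bregman gap: pairing with
`P_α (|G|^p / conj G)` is pairing with `|G|^p / conj G`, and `F` beats `G` when paired with `k`,
so `Re ∫ F conj (|G|^p / conj G) dA_α ≥ 1 - 2 δ`. -/
lemma integral_gap_le {p q α : ℝ} (hpq : p.HolderConjugate q) (hα : -1 < α)
    {k F G : ℂ → ℂ} (hk : MemAp q α k) (hF : IsExtremalFor p α k F) {c : ℝ} (hc : 0 < c)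
    (hG : MemAp p α G) (hGnorm : bNorm p α G = 1)
    (hproj : MemAp q α (bergmanProj α (sgnPow p G))) {δ : ℝ}
    (hclose : bNorm q α (fun z => bergmanProj α (sgnPow p G) z - c * k z) < δ) :
    Integrable (gap p F G) (diskMeas α) ∧ ∫ z, gap p F G z ∂(diskMeas α) ≤ 2 * p * δ := by
  obtain ⟨hFA, hFnorm, hFext⟩ := hF
  have hFG := hFext G hG hGnorm.le
  rw [pairing_eq hα, pairing_eq hα] at hFG
  have hFp := integrable_of_memAp hα hFA
  have hGp := integrable_of_memAp hα hG
  have hkq := integrable_of_memAp hα hk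
  have hKq := integrable_of_memAp hα hproj
  have hF1 := integral_eq_one_of_bNorm hα hpq.pos hFnorm
  have hG1 := integral_eq_one_of_bNorm hα hpq.pos hGnorm
  have hFm := aesm_of_differentiableOn (α := α) hFA.1
  have hGm := aesm_of_differentiableOn (α := α) hG.1
  have hkm := aesm_of_differentiableOn (α := α) hk.1
  have hKm := aesm_of_differentiableOn (α := α) hproj.1
  have hψm := aesm_sgnPow (p := p) hGm
  have hψq : Integrable (fun z => ‖sgnPow p G z‖ ^ q) (diskMeas α) := by
    simpa only [norm_sgnPow_rpow hpq] using hGp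
  have hdual : ∀ {f : ℂ → ℂ}, MemAp p α f →
      ∫ z, f z * (starRingEnd ℂ) (bergmanProj α (sgnPow p G) z) ∂(diskMeas α) =
        ∫ z, f z * (starRingEnd ℂ) (sgnPow p G z) ∂(diskMeas α) := fun {f} hf =>
    integral_mul_conj_bergmanProj hα hpq hf.1 (integrable_of_memAp hα hf) hψm hψq hproj.1 hKq
  set K := bergmanProj α (sgnPow p G) with hKdef
  rw [bNorm_eq hα] at hclose
  have hckm : AEStronglyMeasurable (fun z => (c:ℂ) * k z) (diskMeas α) := hkm.const_mul _
  have hckq : Integrable (fun z => ‖(c:ℂ) * k z‖ ^ q) (diskMeas α) := by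
    simp only [norm_mul, Real.mul_rpow (norm_nonneg _) (norm_nonneg _)]
    exact hkq.const_mul _
  have hDq := integrable_norm_rpow_sub hpq.symm.pos hKm hckm hKq hckq
  have hDm : AEStronglyMeasurable (fun z => K z - c * k z) (diskMeas α) := hKm.sub hckm
  have hsplit : ∀ {f : ℂ → ℂ}, AEStronglyMeasurable f (diskMeas α) →
      Integrable (fun z => ‖f z‖ ^ p) (diskMeas α) → ∫ z, ‖f z‖ ^ p ∂(diskMeas α) = 1 →
      |(∫ z, f z * (starRingEnd ℂ) (K z) ∂(diskMeas α)).re -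
        c * (∫ z, f z * (starRingEnd ℂ) (k z) ∂(diskMeas α)).re| ≤ δ := fun {f} hfm hfp hf1 => by
    obtain ⟨i1, b1⟩ := holder_conj hpq hfm hDm hfp hDq
    obtain ⟨i2, -⟩ := holder_conj hpq hfm hkm hfp hkq
    have e : ∫ z, f z * (starRingEnd ℂ) (K z) ∂(diskMeas α) =
        c * ∫ z, f z * (starRingEnd ℂ) (k z) ∂(diskMeas α) +
          ∫ z, f z * (starRingEnd ℂ) (K z - c * k z) ∂(diskMeas α) := by
      rw [← integral_const_mul, ← integral_add (i2.const_mul _) i1]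
      congr 1
      ext z
      simp only [map_sub, map_mul, Complex.conj_ofReal]
      ring
    rw [hf1, Real.one_rpow, one_mul] at b1
    rw [e, Complex.add_re, Complex.re_ofReal_mul, add_sub_cancel_left]
    exact (Complex.abs_re_le_norm _).trans (b1.trans hclose.le)
  have sF := hsplit hFm hFp hF1
  have sG := hsplit hGm hGp hG1
  have hGψ : (∫ z, G z * (starRingEnd ℂ) (sgnPow p G z) ∂(diskMeas α)).re = 1 := by
    simp only [self_mul_conj_sgnPow hpq.lt]
    rw [integral_complex_ofReal, hG1, Complex.ofReal_re]
  rw [hdual hFA] at sF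
  rw [hdual hG, hGψ] at sG
  rw [abs_le] at sF sG
  have hc' := mul_le_mul_of_nonneg_left hFG hc.le
  have hlow : 1 - 2 * δ ≤ (∫ z, F z * (starRingEnd ℂ) (sgnPow p G z) ∂(diskMeas α)).re := by
    linarith [sF.1, sG.2]
  obtain ⟨iψ, -⟩ := holder_conj hpq hFm hψm hFp hψq
  have i3 : Integrable (fun z => ‖F z‖ ^ p + (p - 1) * ‖G z‖ ^ p) (diskMeas α) :=
    hFp.add (hGp.const_mul _)
  have i4 : Integrable (fun z => p * (F z * (starRingEnd ℂ) (sgnPow p G z)).re) (diskMeas α) :=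
    iψ.re.const_mul p
  refine ⟨i3.sub i4, ?_⟩
  have hre : ∫ z, (F z * (starRingEnd ℂ) (sgnPow p G z)).re ∂(diskMeas α) =
      (∫ z, F z * (starRingEnd ℂ) (sgnPow p G z) ∂(diskMeas α)).re := integral_re iψ
  have e : ∫ z, gap p F G z ∂(diskMeas α) =
      p - p * (∫ z, F z * (starRingEnd ℂ) (sgnPow p G z) ∂(diskMeas α)).re := by
    simp only [gap]
    rw [integral_sub i3 i4, integral_add hFp (hGp.const_mul _), integral_const_mul,
      integral_const_mul, hF1, hG1, hre]
    ring
  rw [e]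
  nlinarith [hpq.pos]

/-- The case `p > 2`: the gap controls `|F - G|^p` pointwise. -/
lemma bNorm_sub_le_of_two_lt {p α δ : ℝ} (hp : 2 < p) (hα : -1 < α) (hδ : 0 < δ) {F G : ℂ → ℂ}
    (hi : Integrable (gap p F G) (diskMeas α))
    (hgap : ∫ z, gap p F G z ∂(diskMeas α) ≤ 2 * p * δ) :
    bNorm p α (fun z => F z - G z) ≤ 2 * p ^ (1/p) * δ ^ (1/p) := by
  have hp0 : 0 < p := by linarith
  have h1 : ∫ z, ‖F z - G z‖ ^ p ∂(diskMeas α) ≤ 2 ^ p * p * δ := by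
    calc ∫ z, ‖F z - G z‖ ^ p ∂(diskMeas α)
        ≤ ∫ z, 2 ^ (p - 1) * gap p F G z ∂(diskMeas α) :=
          integral_mono_of_nonneg
            (Filter.Eventually.of_forall fun z => Real.rpow_nonneg (norm_nonneg _) _)
            (hi.const_mul _) (Filter.Eventually.of_forall fun z => norm_sub_rpow_le_gap hp F G z)
      _ ≤ 2 ^ (p - 1) * (2 * p * δ) := by
          rw [integral_const_mul]; gcongr
      _ = 2 ^ p * p * δ := by
          have : (2:ℝ) ^ p = 2 ^ (p - 1) * 2 := by
            rw [← Real.rpow_add_one two_ne_zero]; simp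
          rw [this]; ring
  rw [bNorm_eq hα]
  calc (∫ z, ‖F z - G z‖ ^ p ∂(diskMeas α)) ^ (1 / p) ≤ (2 ^ p * p * δ) ^ (1 / p) :=
        Real.rpow_le_rpow (integral_nonneg fun z => Real.rpow_nonneg (norm_nonneg _) _) h1
          (by positivity)
    _ = 2 * p ^ (1/p) * δ ^ (1/p) := by
        rw [Real.mul_rpow (by positivity) hδ.le, Real.mul_rpow (by positivity) hp0.le,
          ← Real.rpow_mul zero_le_two, mul_one_div_cancel hp0.ne', Real.rpow_one]

/-- The factorisation to which Hölder's inequality is applied; `d ≤ S` forces `d = 0` when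
`S = 0`, where `S ^ (p - 2)` is a junk value. -/
lemma two_factor_eq {p d S : ℝ} (hp : 1 < p) (hd : 0 ≤ d) (hS : 0 ≤ S)
    (hdS : d ≤ S) : (S ^ (p - 2) * d ^ 2) ^ (p / 2) * (S ^ p) ^ (1 - p / 2) = d ^ p := by
  rcases hS.eq_or_lt with rfl | hS
  · have : d = 0 := le_antisymm hdS hd
    subst this
    simp [Real.zero_rpow (by linarith : p ≠ 0), Real.zero_rpow (by linarith : p / 2 ≠ 0)]
  · have e1 : (d ^ 2) ^ (p / 2) = d ^ p := by
      rw [← Real.rpow_natCast, ← Real.rpow_mul hd]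
      congr 1; push_cast; ring
    have e2 : (S ^ (p - 2)) ^ (p / 2) * (S ^ p) ^ (1 - p / 2) = 1 := by
      rw [← Real.rpow_mul hS.le, ← Real.rpow_mul hS.le, ← Real.rpow_add hS]
      ring_nf
      exact Real.rpow_zero _
    rw [Real.mul_rpow (by positivity) (by positivity), e1, mul_right_comm, e2, one_mul]

/-- The case `p < 2`: the gap only controls `(|F| + |G|)^(p-2) |F - G|^2`, and Hölder's inequality
with exponents `2/p` and `2/(2-p)` removes the weight. -/
lemma bNorm_sub_le_of_lt_two {p α δ : ℝ} (hp : 1 < p) (hp2 : p < 2) (hα : -1 < α) (hδ : 0 < δ)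
    {F G : ℂ → ℂ} (hF : MemAp p α F) (hG : MemAp p α G)
    (hFnorm : bNorm p α F = 1) (hGnorm : bNorm p α G = 1)
    (hi : Integrable (gap p F G) (diskMeas α))
    (hgap : ∫ z, gap p F G z ∂(diskMeas α) ≤ 2 * p * δ) :
    bNorm p α (fun z => F z - G z) ≤
      2 * Real.sqrt 2 * (p - 1) ^ (-(1:ℝ)/2) * δ ^ ((1:ℝ)/2) := by
  have hp0 : 0 < p := by linarith
  have hq0 : 0 < 1 - p / 2 := by linarith
  have hp1 : 0 < p - 1 := by linarith
  have hFp := integrable_of_memAp hα hF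
  have hGp := integrable_of_memAp hα hG
  have hF1 := integral_eq_one_of_bNorm hα hp0 hFnorm
  have hG1 := integral_eq_one_of_bNorm hα hp0 hGnorm
  have hFm := (aesm_of_differentiableOn (α := α) hF.1).aemeasurable
  have hGm := (aesm_of_differentiableOn (α := α) hG.1).aemeasurable
  -- `T` is the weighted square controlled by the gap, and `|F - G|^p = T^(p/2) S^(1-p/2)`.
  set T : ℂ → ℝ := fun z => (‖F z‖ + ‖G z‖) ^ (p - 2) * ‖F z - G z‖ ^ 2 with hT
  set S : ℂ → ℝ := fun z => (‖F z‖ + ‖G z‖) ^ p with hS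
  have hT0 : ∀ z, 0 ≤ T z := fun z => by positivity
  have hS0 : ∀ z, 0 ≤ S z := fun z => by positivity
  have hTm : AEStronglyMeasurable T (diskMeas α) := AEMeasurable.aestronglyMeasurable (by fun_prop)
  have hSm : AEStronglyMeasurable S (diskMeas α) := AEMeasurable.aestronglyMeasurable (by fun_prop)
  have hTle : ∀ z, T z ≤ 2 / (p * (p - 1)) * gap p F G z := fun z => by
    have h := sq_mul_rpow_le_gap hp hp2 F G z
    rw [div_mul_eq_mul_div, le_div_iff₀ (by positivity)]
    simp only [hT]
    nlinarith
  have hSle : ∀ z, S z ≤ 2 ^ (p - 1) * (‖F z‖ ^ p + ‖G z‖ ^ p) := fun z => by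
    have h := NNReal.rpow_add_le_mul_rpow_add_rpow ‖F z‖₊ ‖G z‖₊ hp.le
    exact_mod_cast h
  have iT : Integrable T (diskMeas α) := (hi.const_mul (2 / (p * (p - 1)))).mono' hTm
    (Filter.Eventually.of_forall fun z => by rw [Real.norm_of_nonneg (hT0 z)]; exact hTle z)
  have iS : Integrable S (diskMeas α) := ((hFp.add hGp).const_mul (2 ^ (p - 1))).mono' hSm
    (Filter.Eventually.of_forall fun z => by rw [Real.norm_of_nonneg (hS0 z)]; exact hSle z)
  have bT : ∫ z, T z ∂(diskMeas α) ≤ 4 * δ / (p - 1) := by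
    calc ∫ z, T z ∂(diskMeas α) ≤ ∫ z, 2 / (p * (p - 1)) * gap p F G z ∂(diskMeas α) :=
          integral_mono iT (hi.const_mul _) hTle
      _ ≤ 2 / (p * (p - 1)) * (2 * p * δ) := by rw [integral_const_mul]; gcongr
      _ = 4 * δ / (p - 1) := by field_simp; ring
  have bS : ∫ z, S z ∂(diskMeas α) ≤ 2 ^ p := by
    calc ∫ z, S z ∂(diskMeas α) ≤ ∫ z, 2 ^ (p - 1) * (‖F z‖ ^ p + ‖G z‖ ^ p) ∂(diskMeas α) :=
          integral_mono iS ((hFp.add hGp).const_mul _) hSle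
      _ = 2 ^ (p - 1) * 2 := by
          rw [integral_const_mul, integral_add hFp hGp, hF1, hG1]; norm_num
      _ = 2 ^ p := by rw [← Real.rpow_add_one two_ne_zero]; simp
  have hconj : (2 / p).HolderConjugate (1 - p / 2)⁻¹ := by
    refine Real.holderConjugate_iff.2 ⟨by rw [lt_div_iff₀ hp0]; linarith, ?_⟩
    rw [inv_inv, inv_div]; ring
  have cancel : ∀ {x s : ℝ}, 0 ≤ x → s ≠ 0 → (x ^ s) ^ s⁻¹ = x := fun hx hs =>
    Real.rpow_rpow_inv hx hs
  have hp2' : p / 2 ≠ 0 := by positivity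
  have mem : ∀ {U : ℂ → ℝ} {s t : ℝ}, (∀ z, 0 ≤ U z) → Integrable U (diskMeas α) → 0 < s →
      t = s⁻¹ → MemLp (fun z => U z ^ s) (ENNReal.ofReal t) (diskMeas α) :=
    fun {U s t} hU iU hs ht => by
      have ht0 : 0 < t := by rw [ht]; positivity
      have hm : AEMeasurable U (diskMeas α) := iU.aestronglyMeasurable.aemeasurable
      rw [← integrable_norm_rpow_iff (AEMeasurable.aestronglyMeasurable (by fun_prop))
        (by simpa using ht0) ENNReal.ofReal_ne_top, ENNReal.toReal_ofReal ht0.le]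
      refine iU.congr (Filter.Eventually.of_forall fun z => ?_)
      simp only
      rw [Real.norm_of_nonneg (Real.rpow_nonneg (hU z) _), ht, cancel (hU z) hs.ne']
  have hH := integral_mul_le_Lp_mul_Lq_of_nonneg hconj (μ := diskMeas α)
    (f := fun z => T z ^ (p / 2)) (g := fun z => S z ^ (1 - p / 2))
    (Filter.Eventually.of_forall fun z => Real.rpow_nonneg (hT0 z) _)
    (Filter.Eventually.of_forall fun z => Real.rpow_nonneg (hS0 z) _)
    (mem hT0 iT (by positivity) (inv_div p 2).symm) (mem hS0 iS hq0 rfl)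
  have eTS : ∀ z, T z ^ (p / 2) * S z ^ (1 - p / 2) = ‖F z - G z‖ ^ p := fun z =>
    two_factor_eq hp (norm_nonneg _) (by positivity) (norm_sub_le _ _)
  have eT : ∀ z, (T z ^ (p / 2)) ^ (2 / p) = T z := fun z => by
    rw [← inv_div p 2, cancel (hT0 z) hp2']
  have eS : ∀ z, (S z ^ (1 - p / 2)) ^ (1 - p / 2)⁻¹ = S z := fun z => cancel (hS0 z) hq0.ne'
  simp only [eTS, eT, eS, one_div, inv_inv, inv_div] at hH
  have hsq : (2:ℝ) ^ (1 - p / 2) ≤ Real.sqrt 2 := by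
    rw [Real.sqrt_eq_rpow]
    exact Real.rpow_le_rpow_of_exponent_le one_le_two (by linarith)
  rw [bNorm_eq hα]
  calc (∫ z, ‖F z - G z‖ ^ p ∂(diskMeas α)) ^ (1 / p)
      ≤ ((4 * δ / (p - 1)) ^ (p / 2) * (2 ^ p) ^ (1 - p / 2)) ^ (1 / p) := by
        refine Real.rpow_le_rpow (integral_nonneg fun z => Real.rpow_nonneg (norm_nonneg _) _)
          (hH.trans ?_) (by positivity)
        have := integral_nonneg (μ := diskMeas α) (f := T) hT0
        have := integral_nonneg (μ := diskMeas α) (f := S) hS0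
        gcongr
    _ = (4 * δ / (p - 1)) ^ ((1:ℝ) / 2) * 2 ^ (1 - p / 2) := by
        rw [Real.mul_rpow (by positivity) (by positivity), ← Real.rpow_mul (by positivity),
          ← Real.rpow_mul zero_le_two, ← Real.rpow_mul zero_le_two]
        congr 2 <;> field_simp
    _ ≤ (4 * δ / (p - 1)) ^ ((1:ℝ) / 2) * Real.sqrt 2 := by gcongr
    _ = 2 * Real.sqrt 2 * (p - 1) ^ (-(1:ℝ)/2) * δ ^ ((1:ℝ)/2) := by
        have h4 : (4:ℝ) ^ ((1:ℝ) / 2) = 2 := by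
          rw [← Real.sqrt_eq_rpow, show (4:ℝ) = 2 ^ 2 by norm_num, Real.sqrt_sq zero_le_two]
        rw [Real.div_rpow (by positivity) hp1.le, Real.mul_rpow (by norm_num) hδ.le, h4,
          neg_div, Real.rpow_neg hp1.le]
        ring

/-- If `G` is a unit-norm function in `A^p_α` whose associated kernel
`P_α(|G|^p/Ḡ)` is within `δ` of a positive multiple `k̂ = c k` of `k` in the
`A^q_α` norm, then `G` is close to the extremal function `F` for `k`:
`‖F - G‖ ≤ 2 p^{1/p} δ^{1/p}` for `p > 2` and
`‖F - G‖ ≤ 2√2 (p-1)^{-1/2} δ^{1/2}` for `p < 2`. -/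
theorem extremal_close_of_kernel_close
    (p q α : ℝ) (hp1 : 1 < p) (hp2 : p ≠ 2) (hq : 1/p + 1/q = 1) (hα : -1 < α)
    (k : ℂ → ℂ) (hk : MemAp q α k) (hkne : ∃ z ∈ unitDisc, k z ≠ 0)
    (F : ℂ → ℂ) (hF : IsExtremalFor p α k F)
    (c : ℝ) (hc : 0 < c)
    (G : ℂ → ℂ) (hG : MemAp p α G) (hGnorm : bNorm p α G = 1)
    (hproj : MemAp q α (bergmanProj α (sgnPow p G)))
    (δ : ℝ) (hδ0 : 0 < δ) (hδ1 : δ < 1)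
    (hclose : bNorm q α (fun z => bergmanProj α (sgnPow p G) z - c * k z) < δ) :
    (2 < p → bNorm p α (fun z => F z - G z) ≤ 2 * p ^ (1/p) * δ ^ (1/p)) ∧
    (p < 2 → bNorm p α (fun z => F z - G z)
        ≤ 2 * Real.sqrt 2 * (p - 1) ^ (-(1:ℝ)/2) * δ ^ ((1:ℝ)/2)) := by
  have hpq : p.HolderConjugate q := by
    refine Real.holderConjugate_iff.2 ⟨hp1, ?_⟩
    simpa only [one_div] using hq
  obtain ⟨hi, hgap⟩ := integral_gap_le hpq hα hk hF hc hG hGnorm hproj hclose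
  exact ⟨fun h => bNorm_sub_le_of_two_lt h hα hδ0 hi hgap,
    fun h => bNorm_sub_le_of_lt_two hp1 h hα hδ0 hF.1 hG hF.2.1 hGnorm hi hgap⟩
end
end

section
/- Let 1 < p < ∞, p ≠ 2, -1 < α < ∞, q the conjugate exponent of p, and let 0 < θ < 2π with θ < 2π(p-1). Suppose k ∈ A^q_α has range contained in the sector {z : -θ/2 < arg z < θ/2} and ‖k‖_{q,α} = 1, and let F be the extremal function for k. Let C_{p,α} be a constant bounding the operator norm of the Bergman projection P_α both on L^p(dA_α) and on L^q(dA_α), and set C_θ = 2 C_{p,α} |sin((p-2)θ/(4(p-1)))|; assume C_θ < 1. Then: if 2 < p < ∞, ‖F - k^{1/(p-1)}‖_{p,α} ≤ 2 p^{1/p} C_θ^{1/p}; and if 1 < p < 2, ‖F - k^{1/(p-1)}‖_{p,α} ≤ 2√2 (p-1)^{-1/2} C_θ^{1/2}. -/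
/-!
Write `f = k ^ (1 / (p - 1))`, `g = |f| ^ (p - 2) f` and `ε = 2 |sin ((p - 2) θ / (4 (p - 1)))|`.
Then `|f| ^ p = |k| ^ q`, so `f` is analytic with unit norm, and `g` differs from `k` only by a
rotation through the angle `(2 - p) / (p - 1) · arg k`, so the sector condition gives
`|g - k| ≤ ε |k|` pointwise (`dual_root_close`).

The function `|·| ^ p` on `ℂ` has gradient `p g` at `f`, and satisfies
`|F| ^ p ≥ |f| ^ p + p Re ((F - f) ḡ) + D` with a remainder `D` that is at least
`2 |(F - f) / 2| ^ p` if `p > 2` (`bregman_gt_two`, from Clarkson's inequality) and at least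
`p (p - 1) / 2 · |F - f| ^ 2 max (|f|, |F|) ^ (p - 2)` if `p < 2` (`bregman_lt_two`).
Integrating, the first two terms cancel as `F` and `f` both have norm `1`; replacing `g` by `k` costs
at most `2 ε` by Young's inequality; and `Re ⟨F - f, k⟩ ≥ 0` because `F` is extremal and `f` is a
competitor. Hence `∫ D dA_α ≤ 2 p ε` (`remainder_bound`). For `p > 2` this is already a bound on the
`L^p` norm of `F - f`; for `p < 2` one uses Hölder's inequality (`integral_rpow_le_of_weighted`)
with `∫ max (|f|, |F|) ^ p dA_α ≤ 2`.

This gives the estimates with `ε` in place of `C_θ = C ε`. Finally `C ≥ 1` since the projection fixes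
the constant `1` (`bergmanProj_one`), by the mean value property on circles.
-/

open MeasureTheory Complex Set Metric

noncomputable section

/-! ### Pointwise convexity inequalities for `|z| ^ p` -/

/-- Tangent line inequality for `x ↦ x ^ p`, `p ≥ 1`. -/
lemma rpow_tangent {p r s : ℝ} (hp : 1 ≤ p) (hr : 0 < r) (hs : 0 ≤ s) :
    r ^ p + p * (r ^ (p - 1) * (s - r)) ≤ s ^ p := by
  have h := one_add_mul_self_le_rpow_one_add (s := s / r - 1) (by have := div_nonneg hs hr.le; linarith) hp
  have e : (1 + (s / r - 1)) = s / r := by ring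
  rw [e, Real.div_rpow hs hr.le, le_div_iff₀ (Real.rpow_pos_of_pos hr p)] at h
  have e2 : r ^ (p - 1) = r ^ p / r := Real.rpow_sub_one hr.ne' p
  calc _ = (1 + p * (s / r - 1)) * r ^ p := by rw [e2]; field_simp
    _ ≤ _ := h

/-- Concavity of `x ↦ x ^ (p - 1)` for `1 ≤ p ≤ 2`: its graph lies below the tangent line at `y`. -/
lemma rpow_increment {p x y : ℝ} (hp : 1 ≤ p) (hp2 : p ≤ 2) (hx : 0 ≤ x) (hy : 0 < y) :
    (p - 1) * (y ^ (p - 2) * (y - x)) ≤ y ^ (p - 1) - x ^ (p - 1) := by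
  have h := rpow_one_add_le_one_add_mul_self (s := x / y - 1)
    (by have := div_nonneg hx hy.le; linarith) (p := p - 1) (by linarith) (by linarith)
  have e : (1 + (x / y - 1)) = x / y := by ring
  rw [e, Real.div_rpow hx hy.le, div_le_iff₀ (Real.rpow_pos_of_pos hy _)] at h
  have e2 : y ^ (p - 2) = y ^ (p - 1) / y := by
    rw [show p - 2 = p - 1 - 1 by ring]; exact Real.rpow_sub_one hy.ne' _
  have : (1 + (p - 1) * (x / y - 1)) * y ^ (p - 1)
      = y ^ (p - 1) - (p - 1) * (y ^ (p - 2) * (y - x)) := by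
    rw [e2]; field_simp; ring
  linarith

/-- Second order Taylor lower bound for `x ↦ x ^ p`, `1 < p < 2`, on the positive axis: the second
derivative is at least its value at the larger of the two points. -/
lemma rpow_taylor_two {p r s : ℝ} (hp : 1 < p) (hp2 : p < 2) (hr : 0 < r) (hs : 0 ≤ s) :
    r ^ p + p * (r ^ (p - 1) * (s - r)) + p * (p - 1) / 2 * ((s - r) ^ 2 * (max r s) ^ (p - 2))
      ≤ s ^ p := by
  set M := max r s with hM
  have hM0 : 0 < M := lt_of_lt_of_le hr (le_max_left _ _)
  set Φ : ℝ → ℝ := fun x => x ^ p - p * (r ^ (p - 1) * (x - r))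
    - p * (p - 1) / 2 * ((x - r) ^ 2 * M ^ (p - 2)) with hΦ
  have hd : ∀ x, HasDerivAt Φ
      (p * (x ^ (p - 1) - r ^ (p - 1) - (p - 1) * (M ^ (p - 2) * (x - r)))) x := by
    intro x
    have h1 := Real.hasDerivAt_rpow_const (x := x) (p := p) (Or.inr hp.le)
    have h2 := (((hasDerivAt_id x).sub_const r).const_mul (r ^ (p - 1))).const_mul p
    have h3 := ((((hasDerivAt_id x).sub_const r).pow 2).mul_const (M ^ (p - 2))).const_mul
      (p * (p - 1) / 2)
    refine ((h1.sub h2).sub h3).congr_deriv ?_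
    simp
    ring
  have hc : Continuous Φ := continuous_iff_continuousAt.2 fun x => (hd x).continuousAt
  have hΦr : Φ r = r ^ p := by simp [hΦ]
  have key : r ^ p ≤ Φ s := by
    rw [← hΦr]
    rcases le_total s r with h | h
    · have hMr : M = r := max_eq_left h
      refine antitoneOn_of_deriv_nonpos (convex_Icc s r) hc.continuousOn
        (fun x _ => (hd x).differentiableAt.differentiableWithinAt) ?_ ⟨le_rfl, h⟩ ⟨h, le_rfl⟩ h
      intro x hx
      rw [interior_Icc] at hx
      rw [(hd x).deriv, hMr]
      have := rpow_increment hp.le hp2.le (hs.trans hx.1.le) hr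
      apply mul_nonpos_of_nonneg_of_nonpos (by linarith)
      linarith
    · have hMs : M = s := max_eq_right h
      refine monotoneOn_of_deriv_nonneg (convex_Icc r s) hc.continuousOn
        (fun x _ => (hd x).differentiableAt.differentiableWithinAt) ?_ ⟨le_rfl, h⟩ ⟨h, le_rfl⟩ h
      intro x hx
      rw [interior_Icc] at hx
      rw [(hd x).deriv, hMs]
      have hx0 : 0 < x := hr.trans hx.1
      have h1 := rpow_increment hp.le hp2.le hr.le hx0
      have h2 : s ^ (p - 2) ≤ x ^ (p - 2) :=
        Real.rpow_le_rpow_of_nonpos hx0 hx.2.le (by linarith)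
      have h3 : (p - 1) * (s ^ (p - 2) * (x - r)) ≤ (p - 1) * (x ^ (p - 2) * (x - r)) := by
        have := hx.1
        gcongr
      apply mul_nonneg (by linarith)
      linarith
  simp only [hΦ] at key
  linarith

lemma re_mul_conj_le (a b : ℂ) : (b * (starRingEnd ℂ) a).re ≤ ‖b‖ * ‖a‖ := by
  refine (Complex.re_le_norm _).trans ?_
  simp

lemma re_sub_mul_conj (a b : ℂ) :
    ((b - a) * (starRingEnd ℂ) a).re = (b * (starRingEnd ℂ) a).re - ‖a‖ ^ 2 := by
  rw [sub_mul, Complex.sub_re, Complex.mul_conj, Complex.ofReal_re, Complex.normSq_eq_norm_sq]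

lemma norm_sub_sq_eq (a b : ℂ) :
    ‖b - a‖ ^ 2 = ‖b‖ ^ 2 + ‖a‖ ^ 2 - 2 * (b * (starRingEnd ℂ) a).re := by
  rw [← Complex.normSq_eq_norm_sq, ← Complex.normSq_eq_norm_sq, ← Complex.normSq_eq_norm_sq,
    Complex.normSq_sub]

/-- Quantitative convexity of `z ↦ |z| ^ p` on `ℂ` for `1 < p < 2`, about a nonzero point. -/
lemma bregman_lt_two {p : ℝ} (hp : 1 < p) (hp2 : p < 2) {a : ℂ} (ha : a ≠ 0) (b : ℂ) :
    ‖a‖ ^ p + p * (‖a‖ ^ (p - 2) * ((b - a) * (starRingEnd ℂ) a).re)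
      + p * (p - 1) / 2 * (‖b - a‖ ^ 2 * (max ‖a‖ ‖b‖) ^ (p - 2)) ≤ ‖b‖ ^ p := by
  have hr : 0 < ‖a‖ := norm_pos_iff.2 ha
  have h1 := rpow_taylor_two hp hp2 hr (norm_nonneg b)
  rw [re_sub_mul_conj, norm_sub_sq_eq]
  have hc := re_mul_conj_le a b
  set c := (b * (starRingEnd ℂ) a).re
  set r := ‖a‖
  set s := ‖b‖
  set M := max r s with hM
  have e1 : r ^ (p - 1) = r ^ (p - 2) * r := by
    rw [← Real.rpow_add_one hr.ne']; congr 1; ring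
  have h2 : M ^ (p - 2) ≤ r ^ (p - 2) :=
    Real.rpow_le_rpow_of_nonpos hr (le_max_left _ _) (by linarith)
  have h3 : 0 ≤ M ^ (p - 2) := Real.rpow_nonneg (hr.le.trans (le_max_left _ _)) _
  rw [e1] at h1
  -- Both sides are affine in `c = Re (b ā)`; the slope below makes `c = |a| |b|` the worst case.
  have h4 : 0 ≤ (r ^ (p - 2) - (p - 1) * M ^ (p - 2)) * (s * r - c) :=
    mul_nonneg (by nlinarith) (by linarith)
  have h5 := mul_nonneg (by linarith : (0:ℝ) ≤ p) h4
  nlinarith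

/-- Quantitative convexity of `z ↦ |z| ^ p` on `ℂ` for `p > 2`, about a nonzero point: Clarkson's
inequality combined with the tangent inequality at the midpoint. -/
lemma bregman_gt_two {p : ℝ} (hp2 : 2 < p) {a : ℂ} (ha : a ≠ 0) (b : ℂ) :
    ‖a‖ ^ p + p * (‖a‖ ^ (p - 2) * ((b - a) * (starRingEnd ℂ) a).re)
      + 2 * (‖b - a‖ / 2) ^ p ≤ ‖b‖ ^ p := by
  have hr : 0 < ‖a‖ := norm_pos_iff.2 ha
  set m : ℂ := (a + b) / 2 with hm
  have hsq : ∀ x : ℝ, 0 ≤ x → (x ^ 2) ^ (p / 2) = x ^ p := by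
    intro x hx
    rw [← Real.rpow_natCast, ← Real.rpow_mul hx]; congr 1; push_cast; ring
  have par : ‖m‖ ^ 2 + (‖b - a‖ / 2) ^ 2 = 1 / 2 * ‖a‖ ^ 2 + 1 / 2 * ‖b‖ ^ 2 := by
    have := parallelogram_law_with_norm ℝ b a
    rw [hm, norm_div, add_comm a b]
    norm_num
    linarith
  have h1 := Real.add_rpow_le_rpow_add (sq_nonneg ‖m‖) (sq_nonneg (‖b - a‖ / 2))
    (show 1 ≤ p / 2 by linarith)
  have h2 := (convexOn_rpow (show 1 ≤ p / 2 by linarith)).2 (sq_nonneg ‖a‖) (sq_nonneg ‖b‖)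
    (by norm_num : (0:ℝ) ≤ 1 / 2) (by norm_num : (0:ℝ) ≤ 1 / 2) (by norm_num)
  simp only [smul_eq_mul] at h2
  rw [par] at h1
  rw [hsq _ (norm_nonneg _), hsq _ (by positivity)] at h1
  rw [hsq _ (norm_nonneg _), hsq _ (norm_nonneg _)] at h2
  have h3 := rpow_tangent (p := p) (by linarith) hr (norm_nonneg m)
  have h4 : ‖a‖ ^ (p - 2) * (((b - a) * (starRingEnd ℂ) a).re / 2)
      ≤ ‖a‖ ^ (p - 1) * (‖m‖ - ‖a‖) := by
    have e1 : ‖a‖ ^ (p - 1) = ‖a‖ ^ (p - 2) * ‖a‖ := by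
      rw [← Real.rpow_add_one hr.ne']; congr 1; ring
    have h5 := re_mul_conj_le a m
    have e2 : ((b - a) * (starRingEnd ℂ) a).re / 2 = (m * (starRingEnd ℂ) a).re - ‖a‖ ^ 2 := by
      rw [← re_sub_mul_conj, hm]
      have : (a + b) / 2 - a = ((1 / 2 : ℝ) : ℂ) * (b - a) := by push_cast; ring
      rw [this, mul_assoc, Complex.re_ofReal_mul]; ring
    rw [e1, e2, mul_assoc]
    apply mul_le_mul_of_nonneg_left _ (Real.rpow_nonneg hr.le _)
    linarith
  have h6 := mul_le_mul_of_nonneg_left h4 (by linarith : (0:ℝ) ≤ p)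
  linarith

/-! ### The weighted measure and the Bergman projection of `1` -/

lemma wt_pos {α : ℝ} (hα : -1 < α) {z : ℂ} (hz : z ∈ unitDisc) : 0 < wt α z := by
  have hz' : ‖z‖ < 1 := by simpa [unitDisc] using hz
  have : 0 < 1 - ‖z‖ ^ 2 := by nlinarith [norm_nonneg z]
  have h1 : 0 < α + 1 := by linarith
  unfold wt
  have := Real.pi_pos
  positivity

lemma continuousOn_wt (α : ℝ) : ContinuousOn (wt α) unitDisc := by
  unfold wt
  refine continuousOn_const.mul (ContinuousOn.rpow_const (by fun_prop) ?_)
  intro z hz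
  have hz' : ‖z‖ < 1 := by simpa [unitDisc] using hz
  left
  nlinarith [norm_nonneg z]

/-- The radial profile of the weight integrates to `1 / (2 (α + 1))`; its primitive is
`-(1 - r²)^(α+1) / (2 (α+1))`, and the integrand may be singular at `r = 1`. -/
lemma integral_radial {α : ℝ} (hα : -1 < α) :
    ∫ y in Set.Ioo (0:ℝ) 1, y * (1 - y ^ 2) ^ α = 1 / (2 * (α + 1)) := by
  have h1 : 0 < α + 1 := by linarith
  set G : ℝ → ℝ := fun y => -(1 - y ^ 2) ^ (α + 1) / (2 * (α + 1)) with hG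
  have hc : ContinuousOn G (Set.Icc 0 1) := by
    refine ContinuousOn.div_const (ContinuousOn.neg (ContinuousOn.rpow_const (by fun_prop) ?_)) _
    intro x _
    exact Or.inr h1.le
  have hpos : ∀ x ∈ Set.Ioo (0:ℝ) 1, 0 < 1 - x ^ 2 := by
    intro x hx
    nlinarith [hx.1, hx.2]
  have hd : ∀ x ∈ Set.Ioo (0:ℝ) 1, HasDerivAt G (x * (1 - x ^ 2) ^ α) x := by
    intro x hx
    have h2 : HasDerivAt (fun y : ℝ => 1 - y ^ 2) (-(2 * x)) x := by
      simpa using ((hasDerivAt_id x).pow 2).const_sub 1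
    refine ((h2.rpow_const (p := α + 1) (Or.inl (hpos x hx).ne')).neg.div_const _).congr_deriv ?_
    rw [add_sub_cancel_right]
    field_simp
  have hi := intervalIntegral.integrableOn_deriv_of_nonneg hc hd
    (fun x hx => mul_nonneg hx.1.le (Real.rpow_nonneg (hpos x hx).le _))
  have h3 := intervalIntegral.integral_eq_sub_of_hasDerivAt_of_le zero_le_one hc hd
    ((intervalIntegrable_iff_integrableOn_Ioc_of_le zero_le_one).2 hi)
  rw [intervalIntegral.integral_of_le zero_le_one, integral_Ioc_eq_integral_Ioo] at h3
  rw [h3, hG]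
  simp only [one_pow, sub_self, Real.zero_rpow h1.ne']
  simp [neg_div]

/-- `dA_α` is a probability measure. -/
lemma integral_wt {α : ℝ} (hα : -1 < α) : ∫ z in unitDisc, wt α z = 1 := by
  have h1 : 0 < α + 1 := by linarith
  have h := integral_fun_norm_addHaar (volume : Measure ℂ)
    ((Set.Iio (1:ℝ)).indicator fun y => (α + 1) / Real.pi * (1 - y ^ 2) ^ α)
  have e1 : (fun x : ℂ => (Set.Iio (1:ℝ)).indicator
      (fun y => (α + 1) / Real.pi * (1 - y ^ 2) ^ α) ‖x‖) = unitDisc.indicator (wt α) := by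
    ext x
    simp [Set.indicator, unitDisc, wt]
  rw [e1, integral_indicator measurableSet_unitDisc] at h
  rw [h, Complex.finrank_real_complex]
  have e2 : (fun y : ℝ => y ^ (2 - 1) • (Set.Iio (1:ℝ)).indicator
      (fun y => (α + 1) / Real.pi * (1 - y ^ 2) ^ α) y)
      = (Set.Iio (1:ℝ)).indicator
          (fun y => (α + 1) / Real.pi * (y * (1 - y ^ 2) ^ α)) := by
    ext y
    by_cases hy : y < 1
    · simp [hy]; ring
    · simp [hy]
  rw [e2, setIntegral_indicator measurableSet_Iio, Set.Ioi_inter_Iio, integral_const_mul,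
    integral_radial hα]
  have e3 : (volume : Measure ℂ).real (Metric.ball 0 1) = Real.pi := by
    simp [Measure.real, Complex.volume_ball]
  rw [e3]
  have := Real.pi_pos
  simp
  field_simp

lemma integrable_wt {α : ℝ} (hα : -1 < α) : IntegrableOn (wt α) unitDisc :=
  Integrable.of_integral_ne_zero (by rw [integral_wt hα]; norm_num)

lemma setIntegral_rot (h : ℂ → ℂ) (φ : ℝ) :
    ∫ w in unitDisc, h (circleMap 0 1 φ * w) = ∫ w in unitDisc, h w := by
  have hm := (rotation (Circle.exp φ)).measurePreserving
  have := hm.setIntegral_preimage_emb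
    (rotation (Circle.exp φ)).toHomeomorph.measurableEmbedding h unitDisc
  rw [← this]
  have e : (rotation (Circle.exp φ)) ⁻¹' unitDisc = unitDisc := by
    ext x
    simp only [unitDisc, Set.mem_preimage, mem_ball_zero_iff, LinearIsometryEquiv.norm_map]
  rw [e]
  simp [circleMap, rotation_apply]

/-- The Bergman projection fixes the constant function `1` on the disc: the kernel is conjugate
analytic in `w`, so its average over each circle is its value at `0`. -/
lemma bergmanProj_one {α : ℝ} (hα : -1 < α) {z : ℂ} (hz : z ∈ unitDisc) :
    bergmanProj α (fun _ => 1) z = 1 := by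
  have hz' : ‖z‖ < 1 := by simpa [unitDisc] using hz
  have hs : 0 < 2 + α := by linarith
  set H : ℂ → ℂ := fun u => 1 / (1 - z * u) ^ ((2:ℂ) + (α:ℂ)) with hH
  have hre : ∀ u : ℂ, ‖u‖ ≤ 1 → 1 - ‖z‖ ≤ (1 - z * u).re := by
    intro u hu
    have h1 : (z * u).re ≤ ‖z‖ := (Complex.re_le_norm _).trans (by
      rw [norm_mul]; exact mul_le_of_le_one_right (norm_nonneg _) hu)
    simp only [Complex.sub_re, Complex.one_re]
    linarith
  have hslit : ∀ u : ℂ, ‖u‖ ≤ 1 → (1 - z * u) ∈ Complex.slitPlane := by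
    intro u hu
    left
    linarith [hre u hu]
  have hne : ∀ u : ℂ, ‖u‖ ≤ 1 → (1 - z * u) ^ ((2:ℂ) + (α:ℂ)) ≠ 0 := by
    intro u hu
    have := Complex.slitPlane_ne_zero (hslit u hu)
    rw [Complex.cpow_def_of_ne_zero this]
    exact Complex.exp_ne_zero _
  have hHd : ∀ u : ℂ, ‖u‖ ≤ 1 → DifferentiableAt ℂ H u := by
    intro u hu
    have h2 : DifferentiableAt ℂ (fun u => (1 - z * u) ^ ((2:ℂ) + (α:ℂ))) u :=
      DifferentiableAt.cpow (by fun_prop) (by fun_prop) (hslit u hu)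
    exact (differentiableAt_const _).div h2 (hne u hu)
  have hHb : ∀ u : ℂ, ‖u‖ ≤ 1 → ‖H u‖ ≤ ((1 - ‖z‖) ^ (2 + α))⁻¹ := by
    intro u hu
    have e : ((2:ℂ) + (α:ℂ)) = ((2 + α : ℝ) : ℂ) := by push_cast; rfl
    simp only [hH]
    rw [e, norm_div, Complex.norm_cpow_real, norm_one, one_div]
    have h0 : 0 < 1 - ‖z‖ := by linarith
    have h3 : 1 - ‖z‖ ≤ ‖1 - z * u‖ := (hre u hu).trans (Complex.re_le_norm _)
    gcongr
  -- Averaging over rotations of `w` turns the integral into a circle average.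
  have hrot : ∀ φ : ℝ, ∫ w in unitDisc, H (circleMap 0 1 φ * (starRingEnd ℂ) w) * (wt α w : ℂ)
      = bergmanProj α (fun _ => 1) z := by
    intro φ
    have := setIntegral_rot (fun w => H ((starRingEnd ℂ) w) * (wt α w : ℂ)) (-φ)
    change _ = ∫ w in unitDisc, H ((starRingEnd ℂ) w) * (wt α w : ℂ)
    rw [← this]
    congr 1
    ext w
    have e1 : (starRingEnd ℂ) (circleMap 0 1 (-φ) * w)
        = circleMap 0 1 φ * (starRingEnd ℂ) w := by
      simp [circleMap, ← Complex.exp_conj]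
    have e2 : wt α (circleMap 0 1 (-φ) * w) = wt α w := by
      simp [wt]
    rw [e1, e2]
  have hin : ∀ w ∈ unitDisc, ∫ φ in Set.Ioc 0 (2 * Real.pi),
      H (circleMap 0 1 φ * (starRingEnd ℂ) w) * (wt α w : ℂ) = 2 * Real.pi * (wt α w : ℂ) := by
    intro w hw
    have hw' : ‖w‖ < 1 := by simpa [unitDisc] using hw
    have hdc : DiffContOnCl ℂ (fun ζ => H (ζ * (starRingEnd ℂ) w)) (Metric.ball 0 |1|) := by
      apply DifferentiableOn.diffContOnCl
      rw [abs_one, closure_ball _ one_ne_zero]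
      intro ζ hζ
      have hζ' : ‖ζ‖ ≤ 1 := by simpa using hζ
      refine DifferentiableAt.differentiableWithinAt ?_
      refine DifferentiableAt.comp (g := H) (f := fun ζ => ζ * (starRingEnd ℂ) w) ζ
        (hHd _ ?_) (by fun_prop)
      rw [norm_mul, RCLike.norm_conj]
      exact mul_le_one₀ hζ' (norm_nonneg _) hw'.le
    have := hdc.circleAverage
    rw [Real.circleAverage_def, intervalIntegral.integral_of_le Real.two_pi_pos.le] at this
    rw [integral_mul_const]
    congr 1
    have hπ : (2 * Real.pi : ℝ) ≠ 0 := Real.two_pi_pos.ne'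
    rw [inv_smul_eq_iff₀ hπ] at this
    rw [this]
    simp [hH]
  have hint : Integrable (Function.uncurry fun (φ : ℝ) (w : ℂ) =>
      H (circleMap 0 1 φ * (starRingEnd ℂ) w) * (wt α w : ℂ))
      ((volume.restrict (Set.Ioc 0 (2 * Real.pi))).prod (volume.restrict unitDisc)) := by
    have hdom : Integrable (fun x : ℝ × ℂ => ((1 - ‖z‖) ^ (2 + α))⁻¹ * wt α x.2)
        ((volume.restrict (Set.Ioc 0 (2 * Real.pi))).prod (volume.restrict unitDisc)) :=
      (Integrable.comp_snd (integrable_wt hα) _).const_mul _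
    have hnorm : ∀ (φ : ℝ) (w : ℂ), w ∈ unitDisc → ‖circleMap 0 1 φ * (starRingEnd ℂ) w‖ ≤ 1 := by
      intro φ w hw
      have hw' : ‖w‖ < 1 := by simpa [unitDisc] using hw
      simpa using hw'.le
    refine hdom.mono' ?_ ?_
    · rw [Measure.prod_restrict]
      refine ContinuousOn.aestronglyMeasurable ?_ (measurableSet_Ioc.prod measurableSet_unitDisc)
      refine ContinuousOn.mul ?_ ?_
      · intro x hx
        refine ContinuousAt.continuousWithinAt ?_
        refine ContinuousAt.comp (g := H) (hHd _ (hnorm _ _ hx.2)).continuousAt ?_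
        fun_prop
      · refine Complex.continuous_ofReal.comp_continuousOn ?_
        exact (continuousOn_wt α).comp continuousOn_snd fun x hx => hx.2
    · rw [Measure.prod_restrict]
      refine (ae_restrict_iff' (measurableSet_Ioc.prod measurableSet_unitDisc)).2
        (Filter.Eventually.of_forall ?_)
      rintro ⟨φ, w⟩ hx
      simp only [Function.uncurry]
      rw [norm_mul, Complex.norm_real, Real.norm_of_nonneg (wt_pos hα hx.2).le]
      exact mul_le_mul_of_nonneg_right (hHb _ (hnorm _ _ hx.2)) (wt_pos hα hx.2).le
  have hswap := integral_integral_swap hint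
  rw [setIntegral_congr_fun measurableSet_Ioc (fun φ _ => hrot φ),
    setIntegral_congr_fun measurableSet_unitDisc hin, integral_const_mul,
    integral_complex_ofReal, integral_wt hα, integral_const] at hswap
  have hπ : (2 * Real.pi : ℂ) ≠ 0 := by exact_mod_cast Real.two_pi_pos.ne'
  have e : (volume.restrict (Set.Ioc 0 (2 * Real.pi))).real Set.univ = 2 * Real.pi := by
    simp [Measure.real, Real.pi_pos.le]
  rw [e] at hswap
  simpa [hπ, Real.pi_ne_zero] using hswap

/-- Any bound for the Bergman projection on `L^p(dA_α)` is at least `1`. -/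
lemma one_le_bound {p α C : ℝ} (hα : -1 < α)
    (h : ∀ g : ℂ → ℂ, IntegrableOn (fun z => ‖g z‖ ^ p * wt α z) unitDisc →
      bNorm p α (bergmanProj α g) ≤ C * bNorm p α g) : 1 ≤ C := by
  have h1 : bNorm p α (fun _ => 1) = 1 := by
    simp [bNorm, integral_wt hα]
  have h2 : bNorm p α (bergmanProj α fun _ => 1) = 1 := by
    rw [← h1]
    unfold bNorm
    congr 1
    exact setIntegral_congr_fun measurableSet_unitDisc fun z hz => by
      simp only [bergmanProj_one hα hz]
  have h3 := h (fun _ => 1) (by simpa using integrable_wt hα)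
  rw [h1, h2] at h3
  linarith

/-! ### The dual element of the root of the kernel -/

lemma norm_exp_log_div (p : ℝ) (κ : ℂ) :
    ‖Complex.exp (Complex.log κ / (p - 1))‖ = Real.exp (Real.log ‖κ‖ / (p - 1)) := by
  rw [Complex.norm_exp]
  congr 1
  rw [show ((p:ℂ) - 1) = ((p - 1 : ℝ) : ℂ) by push_cast; rfl, Complex.div_ofReal_re,
    Complex.log_re]

lemma norm_root_rpow {p q : ℝ} {κ : ℂ} (hκ : κ ≠ 0) (hpq : q = p / (p - 1)) :
    ‖Complex.exp (Complex.log κ / (p - 1))‖ ^ p = ‖κ‖ ^ q := by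
  rw [norm_exp_log_div, ← Real.exp_mul, Real.rpow_def_of_pos (norm_pos_iff.2 hκ), hpq]
  congr 1
  ring

/-- If `f = κ ^ (1 / (p - 1))` then the dual element `|f| ^ (p - 2) f` has the same modulus as `κ`,
and differs from it only by the rotation through the angle `(2 - p) / (p - 1) · arg κ`. -/
lemma dual_root_eq {p : ℝ} (hp : 1 < p) {κ : ℂ} (hκ : κ ≠ 0) :
    ((‖Complex.exp (Complex.log κ / (p - 1))‖ ^ (p - 2) : ℝ) : ℂ)
        * Complex.exp (Complex.log κ / (p - 1))
      = κ * Complex.exp (Complex.I * ((κ.arg * (2 - p) / (p - 1) : ℝ) : ℂ)) := by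
  have h1 : (p:ℂ) - 1 ≠ 0 := by
    have : p - 1 ≠ 0 := by linarith
    exact_mod_cast this
  rw [norm_exp_log_div, ← Real.exp_mul, Complex.ofReal_exp, ← Complex.exp_add]
  nth_rewrite 3 [← Complex.exp_log hκ]
  rw [← Complex.exp_add]
  congr 1
  have h2 : Complex.log κ = (Real.log ‖κ‖ : ℂ) + κ.arg * Complex.I := rfl
  rw [h2]
  push_cast
  field_simp
  ring

/-- Both conditions on the opening `θ` keep this angle in the range where `sin` is monotone. -/
lemma half_angle_le {p θ : ℝ} (hp : 1 < p) (hθ0 : 0 < θ) (hθ1 : θ < 2 * Real.pi)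
    (hθp : θ < 2 * Real.pi * (p - 1)) : |(p - 2) * θ / (4 * (p - 1))| ≤ Real.pi / 2 := by
  rw [abs_div, abs_mul, abs_of_pos hθ0, abs_of_pos (by linarith : 0 < 4 * (p - 1)),
    div_le_iff₀ (by linarith)]
  have hπ := Real.pi_pos
  rcases le_total 2 p with h | h
  · rw [abs_of_nonneg (by linarith)]; nlinarith
  · rw [abs_of_nonpos (by linarith)]; nlinarith

/-- The sector condition controls the distance between `κ` and the dual element of its root. -/
lemma dual_root_close {p θ : ℝ} (hp : 1 < p) (hθ1 : θ < 2 * Real.pi)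
    (hθp : θ < 2 * Real.pi * (p - 1)) {κ : ℂ} (hκ : κ ≠ 0) (harg : |κ.arg| < θ / 2) :
    ‖((‖Complex.exp (Complex.log κ / (p - 1))‖ ^ (p - 2) : ℝ) : ℂ)
        * Complex.exp (Complex.log κ / (p - 1)) - κ‖
      ≤ 2 * |Real.sin ((p - 2) * θ / (4 * (p - 1)))| * ‖κ‖ := by
  have h1 : 0 < p - 1 := by linarith
  have hπ := Real.pi_pos
  have hθ0 : 0 < θ := by linarith [abs_nonneg κ.arg]
  rw [dual_root_eq hp hκ, ← mul_sub_one, norm_mul, Complex.norm_exp_I_mul_ofReal_sub_one, mul_comm]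
  refine mul_le_mul_of_nonneg_right ?_ (norm_nonneg _)
  rw [Real.norm_eq_abs, abs_mul, abs_two]
  refine mul_le_mul_of_nonneg_left ?_ zero_le_two
  have hb := half_angle_le hp hθ0 hθ1 hθp
  have ha : |κ.arg * (2 - p) / (p - 1) / 2| ≤ |(p - 2) * θ / (4 * (p - 1))| := by
    rw [div_div, abs_div, abs_div, abs_mul, abs_mul (p - 2) θ, abs_of_pos hθ0, abs_sub_comm 2 p,
      abs_of_pos (by linarith : 0 < 4 * (p - 1)), abs_of_pos (by linarith : 0 < (p - 1) * 2),
      div_le_div_iff₀ (by linarith) (by linarith)]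
    have := mul_le_mul_of_nonneg_right harg.le
      (mul_nonneg (abs_nonneg (p - 2)) (by linarith : 0 ≤ 4 * (p - 1)))
    nlinarith
  rw [Real.abs_sin_eq_sin_abs_of_abs_le_pi (by linarith),
    Real.abs_sin_eq_sin_abs_of_abs_le_pi (by linarith)]
  exact Real.sin_le_sin_of_le_of_le_pi_div_two
    (by linarith [abs_nonneg (κ.arg * (2 - p) / (p - 1) / 2)]) hb ha

/-! ### Weighted integral estimates -/

lemma bNorm_integral_nonneg {α : ℝ} (hα : -1 < α) (s : ℝ) (g : ℂ → ℂ) :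
    0 ≤ ∫ z in unitDisc, ‖g z‖ ^ s * wt α z :=
  setIntegral_nonneg measurableSet_unitDisc fun _ hz =>
    mul_nonneg (Real.rpow_nonneg (norm_nonneg _) _) (wt_pos hα hz).le

lemma integral_eq_one_of_bNorm_s15 {α s : ℝ} (hα : -1 < α) (hs : 0 < s) {g : ℂ → ℂ}
    (h : bNorm s α g = 1) : ∫ z in unitDisc, ‖g z‖ ^ s * wt α z = 1 := by
  have h0 := bNorm_integral_nonneg hα s g
  unfold bNorm at h
  have h1 := Real.rpow_inv_rpow h0 hs.ne'
  rw [← one_div, h, Real.one_rpow] at h1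
  exact h1.symm

/-- The pairing integrand is integrable, by Young's inequality. -/
lemma integrable_pairing {p q α : ℝ} (hα : -1 < α) (hpq : p.HolderConjugate q) {f k : ℂ → ℂ}
    (hf : MemAp p α f) (hk : MemAp q α k) :
    IntegrableOn (fun z => f z * (starRingEnd ℂ) (k z) * (wt α z : ℂ)) unitDisc := by
  refine Integrable.mono' ((hf.2.div_const p).add (hk.2.div_const q)) ?_ ?_
  · refine ContinuousOn.aestronglyMeasurable ?_ measurableSet_unitDisc
    exact (hf.1.continuousOn.mul (Complex.continuous_conj.comp_continuousOn hk.1.continuousOn)).mul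
      (Complex.continuous_ofReal.comp_continuousOn (continuousOn_wt α))
  · refine (ae_restrict_iff' measurableSet_unitDisc).2 (Filter.Eventually.of_forall fun z hz => ?_)
    have hw := (wt_pos hα hz).le
    have := mul_le_mul_of_nonneg_right
      (Real.young_inequality_of_nonneg (norm_nonneg (f z)) (norm_nonneg (k z)) hpq) hw
    rw [norm_mul, norm_mul, RCLike.norm_conj, Complex.norm_real, Real.norm_of_nonneg hw]
    refine this.trans (le_of_eq ?_)
    simp only [Pi.add_apply]
    ring

/-- The heart of the argument. If the dual element `|f| ^ (p - 2) f` of `f` is within `ε |k|` of `k`,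
and `F` pairs with `k` at least as well as `f` does, then the remainder `D` in the convexity
inequality for `|·| ^ p` between `f` and `F` has integral at most `2 p ε`. -/
lemma remainder_bound {p q α ε : ℝ} (hα : -1 < α) (hpq : p.HolderConjugate q) (hε : 0 ≤ ε)
    {f k F : ℂ → ℂ} (hf : MemAp p α f) (hF : MemAp p α F) (hk : MemAp q α k)
    (hf1 : ∫ z in unitDisc, ‖f z‖ ^ p * wt α z = 1)
    (hF1 : ∫ z in unitDisc, ‖F z‖ ^ p * wt α z = 1)
    (hk1 : ∫ z in unitDisc, ‖k z‖ ^ q * wt α z = 1)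
    (hclose : ∀ z ∈ unitDisc, ‖((‖f z‖ ^ (p - 2) : ℝ) : ℂ) * f z - k z‖ ≤ ε * ‖k z‖)
    (hext : (pairing α f k).re ≤ (pairing α F k).re)
    {D : ℂ → ℝ} (hDc : ContinuousOn D unitDisc) (hD0 : ∀ z ∈ unitDisc, 0 ≤ D z)
    (hD : ∀ z ∈ unitDisc,
      ‖f z‖ ^ p + p * (‖f z‖ ^ (p - 2) * ((F z - f z) * (starRingEnd ℂ) (f z)).re) + D z
        ≤ ‖F z‖ ^ p) :
    IntegrableOn (fun z => D z * wt α z) unitDisc ∧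
      ∫ z in unitDisc, D z * wt α z ≤ 2 * p * ε := by
  have hp0 : 0 < p := hpq.pos
  have hIf := integrable_pairing hα hpq hf hk
  have hIF := integrable_pairing hα hpq hF hk
  set U : ℂ → ℝ := fun z => ‖F z‖ ^ p * wt α z - ‖f z‖ ^ p * wt α z
    - p * (F z * (starRingEnd ℂ) (k z) * (wt α z : ℂ)).re
    + p * (f z * (starRingEnd ℂ) (k z) * (wt α z : ℂ)).re
    + p * ε * (‖F z‖ ^ p * wt α z / p + ‖f z‖ ^ p * wt α z / p
      + 2 * (‖k z‖ ^ q * wt α z / q)) with hU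
  have hle : ∀ z ∈ unitDisc, D z * wt α z ≤ U z := by
    intro z hz
    have hw := (wt_pos hα hz).le
    set g : ℂ := ((‖f z‖ ^ (p - 2) : ℝ) : ℂ) * f z with hg
    have e1 : ‖f z‖ ^ (p - 2) * ((F z - f z) * (starRingEnd ℂ) (f z)).re
        = ((F z - f z) * (starRingEnd ℂ) (k z)).re
          + ((F z - f z) * (starRingEnd ℂ) (g - k z)).re := by
      rw [← Complex.add_re, ← mul_add, ← map_add, add_sub_cancel, hg, map_mul, Complex.conj_ofReal,
        mul_left_comm, Complex.re_ofReal_mul]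
    have e2 : -(ε * ((‖F z‖ + ‖f z‖) * ‖k z‖))
        ≤ ((F z - f z) * (starRingEnd ℂ) (g - k z)).re := by
      have h1 := (abs_le.1 (Complex.abs_re_le_norm ((F z - f z) * (starRingEnd ℂ) (g - k z)))).1
      rw [norm_mul, RCLike.norm_conj] at h1
      have h2 : ‖F z - f z‖ * ‖g - k z‖ ≤ (‖F z‖ + ‖f z‖) * (ε * ‖k z‖) :=
        mul_le_mul (norm_sub_le _ _) (hclose z hz) (norm_nonneg _) (by positivity)
      linarith
    have y1 := Real.young_inequality_of_nonneg (norm_nonneg (F z)) (norm_nonneg (k z)) hpq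
    have y2 := Real.young_inequality_of_nonneg (norm_nonneg (f z)) (norm_nonneg (k z)) hpq
    have y3 : ε * ((‖F z‖ + ‖f z‖) * ‖k z‖)
        ≤ ε * (‖F z‖ ^ p / p + ‖f z‖ ^ p / p + 2 * (‖k z‖ ^ q / q)) :=
      mul_le_mul_of_nonneg_left (by linarith) hε
    have h3 := hD z hz
    rw [e1] at h3
    have h4 : D z ≤ ‖F z‖ ^ p - ‖f z‖ ^ p - p * (F z * (starRingEnd ℂ) (k z)).re
        + p * (f z * (starRingEnd ℂ) (k z)).re
        + p * (ε * (‖F z‖ ^ p / p + ‖f z‖ ^ p / p + 2 * (‖k z‖ ^ q / q))) := by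
      have e3 : ((F z - f z) * (starRingEnd ℂ) (k z)).re
          = (F z * (starRingEnd ℂ) (k z)).re - (f z * (starRingEnd ℂ) (k z)).re := by
        rw [sub_mul, Complex.sub_re]
      rw [e3] at h3
      have := mul_le_mul_of_nonneg_left (y3.trans' (neg_le.1 e2)) hp0.le
      linarith
    refine (mul_le_mul_of_nonneg_right h4 hw).trans (le_of_eq ?_)
    simp only [hU, Complex.re_mul_ofReal]
    ring
  have i1 : IntegrableOn (fun z => ‖F z‖ ^ p * wt α z - ‖f z‖ ^ p * wt α z) unitDisc :=
    hF.2.sub hf.2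
  have i2 : IntegrableOn (fun z => p * (F z * (starRingEnd ℂ) (k z) * (wt α z : ℂ)).re) unitDisc :=
    hIF.re.const_mul p
  have i3 : IntegrableOn (fun z => p * (f z * (starRingEnd ℂ) (k z) * (wt α z : ℂ)).re) unitDisc :=
    hIf.re.const_mul p
  have i4 : IntegrableOn (fun z => ‖F z‖ ^ p * wt α z / p + ‖f z‖ ^ p * wt α z / p) unitDisc :=
    (hF.2.div_const p).add (hf.2.div_const p)
  have i5 : IntegrableOn (fun z => 2 * (‖k z‖ ^ q * wt α z / q)) unitDisc :=
    (hk.2.div_const q).const_mul 2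
  have i6 : IntegrableOn (fun z => p * ε * (‖F z‖ ^ p * wt α z / p + ‖f z‖ ^ p * wt α z / p
      + 2 * (‖k z‖ ^ q * wt α z / q))) unitDisc := (i4.add i5).const_mul _
  have i12 : IntegrableOn (fun z => ‖F z‖ ^ p * wt α z - ‖f z‖ ^ p * wt α z
      - p * (F z * (starRingEnd ℂ) (k z) * (wt α z : ℂ)).re) unitDisc := i1.sub i2
  have i123 : IntegrableOn (fun z => ‖F z‖ ^ p * wt α z - ‖f z‖ ^ p * wt α z
      - p * (F z * (starRingEnd ℂ) (k z) * (wt α z : ℂ)).re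
      + p * (f z * (starRingEnd ℂ) (k z) * (wt α z : ℂ)).re) unitDisc := i12.add i3
  have hUi : IntegrableOn U unitDisc := i123.add i6
  have hDi : IntegrableOn (fun z => D z * wt α z) unitDisc := by
    refine Integrable.mono' hUi
      ((hDc.mul (continuousOn_wt α)).aestronglyMeasurable measurableSet_unitDisc) ?_
    refine (ae_restrict_iff' measurableSet_unitDisc).2 (Filter.Eventually.of_forall fun z hz => ?_)
    rw [Real.norm_of_nonneg (mul_nonneg (hD0 z hz) (wt_pos hα hz).le)]
    exact hle z hz
  refine ⟨hDi, (setIntegral_mono_on hDi hUi measurableSet_unitDisc hle).trans ?_⟩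
  have r1 : ∫ z in unitDisc, (F z * (starRingEnd ℂ) (k z) * (wt α z : ℂ)).re
      = (pairing α F k).re := integral_re hIF
  have r2 : ∫ z in unitDisc, (f z * (starRingEnd ℂ) (k z) * (wt α z : ℂ)).re
      = (pairing α f k).re := integral_re hIf
  have hUint : ∫ z in unitDisc, U z = 1 - 1 - p * (pairing α F k).re + p * (pairing α f k).re
      + p * ε * (1 / p + 1 / p + 2 * (1 / q)) := by
    simp only [hU]
    rw [integral_add i123 i6, integral_add i12 i3, integral_sub i1 i2,
      integral_sub hF.2 hf.2, integral_const_mul, integral_const_mul, integral_const_mul,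
      integral_add i4 i5, integral_add (hF.2.div_const p) (hf.2.div_const p), integral_const_mul,
      integral_div, integral_div, integral_div, hF1, hf1, hk1, r1, r2]
  rw [hUint]
  have hs : 1 / p + 1 / p + 2 * (1 / q) = 2 := by
    have := hpq.inv_add_inv_eq_one
    simp only [one_div]
    linarith
  rw [hs]
  have := mul_le_mul_of_nonneg_left hext hp0.le
  linarith

/-- Hölder interpolation in the case `p < 2`: a weighted `L²` bound on `h` with weight `M ^ (p - 2)`,
together with an `L^p` bound on `M`, bounds the `L^p` norm of `h`. -/
lemma integral_rpow_le_of_weighted {p α X Y : ℝ} (hα : -1 < α) (hp : 0 < p) (hp2 : p < 2)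
    (hX : 0 < X) (hY : 0 < Y) {h : ℂ → ℂ} {M : ℂ → ℝ} (hM : ∀ z ∈ unitDisc, 0 < M z)
    (hh : ContinuousOn h unitDisc)
    (hXi : IntegrableOn (fun z => ‖h z‖ ^ 2 * M z ^ (p - 2) * wt α z) unitDisc)
    (hYi : IntegrableOn (fun z => M z ^ p * wt α z) unitDisc)
    (hXle : ∫ z in unitDisc, ‖h z‖ ^ 2 * M z ^ (p - 2) * wt α z ≤ X)
    (hYle : ∫ z in unitDisc, M z ^ p * wt α z ≤ Y) :
    ∫ z in unitDisc, ‖h z‖ ^ p * wt α z ≤ X ^ (p / 2) * Y ^ (1 - p / 2) := by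
  set c := X ^ (p / 2) * Y ^ (1 - p / 2) with hc
  have hc0 : 0 < c := mul_pos (Real.rpow_pos_of_pos hX _) (Real.rpow_pos_of_pos hY _)
  set V : ℂ → ℝ := fun z => c * (p / 2 / X * (‖h z‖ ^ 2 * M z ^ (p - 2) * wt α z)
    + (1 - p / 2) / Y * (M z ^ p * wt α z)) with hV
  have hle : ∀ z ∈ unitDisc, ‖h z‖ ^ p * wt α z ≤ V z := by
    intro z hz
    have hw := (wt_pos hα hz).le
    have hMz := hM z hz
    have hx0 : 0 ≤ ‖h z‖ ^ 2 * M z ^ (p - 2) := by positivity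
    have hy0 : 0 ≤ M z ^ p := by positivity
    have ag := Real.geom_mean_le_arith_mean2_weighted (w₁ := p / 2) (w₂ := 1 - p / 2)
      (p₁ := ‖h z‖ ^ 2 * M z ^ (p - 2) / X) (p₂ := M z ^ p / Y)
      (by linarith) (by linarith) (by positivity) (by positivity) (by ring)
    rw [Real.div_rpow hx0 hX.le, Real.div_rpow hy0 hY.le, div_mul_div_comm,
      Real.mul_rpow (by positivity) (by positivity), ← Real.rpow_natCast ‖h z‖ 2,
      ← Real.rpow_mul (norm_nonneg _), ← Real.rpow_mul hMz.le, ← Real.rpow_mul hMz.le, mul_assoc,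
      ← Real.rpow_add hMz] at ag
    rw [show (p - 2) * (p / 2) + p * (1 - p / 2) = 0 by ring, Real.rpow_zero, mul_one,
      show ((2:ℕ):ℝ) * (p / 2) = p by push_cast; ring, ← hc, div_le_iff₀ hc0] at ag
    refine (mul_le_mul_of_nonneg_right ag hw).trans (le_of_eq ?_)
    simp only [hV]
    rw [Real.rpow_natCast]
    ring
  have hVi : IntegrableOn V unitDisc := ((hXi.const_mul _).add (hYi.const_mul _)).const_mul c
  have hhi : IntegrableOn (fun z => ‖h z‖ ^ p * wt α z) unitDisc := by
    refine Integrable.mono' hVi (ContinuousOn.aestronglyMeasurable ?_ measurableSet_unitDisc) ?_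
    · exact (hh.norm.rpow_const fun _ _ => Or.inr hp.le).mul (continuousOn_wt α)
    · refine (ae_restrict_iff' measurableSet_unitDisc).2
        (Filter.Eventually.of_forall fun z hz => ?_)
      rw [Real.norm_of_nonneg (mul_nonneg (by positivity) (wt_pos hα hz).le)]
      exact hle z hz
  refine (setIntegral_mono_on hhi hVi measurableSet_unitDisc hle).trans ?_
  simp only [hV]
  rw [integral_const_mul, integral_add (hXi.const_mul _) (hYi.const_mul _), integral_const_mul,
    integral_const_mul]
  have h1 : p / 2 / X * ∫ z in unitDisc, ‖h z‖ ^ 2 * M z ^ (p - 2) * wt α z ≤ p / 2 := by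
    refine (mul_le_mul_of_nonneg_left hXle (by positivity)).trans (le_of_eq ?_)
    field_simp
  have h2 : (1 - p / 2) / Y * ∫ z in unitDisc, M z ^ p * wt α z ≤ 1 - p / 2 := by
    refine (mul_le_mul_of_nonneg_left hYle (div_nonneg (by linarith) hY.le)).trans (le_of_eq ?_)
    field_simp
  calc _ ≤ c * 1 := mul_le_mul_of_nonneg_left (by linarith) hc0.le
    _ = c := mul_one c

/-! ### The distance from the extremal function to the root of the kernel -/

/-- If the unit-norm kernel `k ∈ A^q_α` has range in the sector `|arg z| < θ/2`,
then the extremal function `F` for `k` is close to `k^{1/(p-1)}`: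
with `C_θ = 2 C_{p,α} |sin((p-2)θ/(4(p-1)))|`, one has
`‖F - k^{1/(p-1)}‖_{p,α} ≤ 2 p^{1/p} C_θ^{1/p}` for `p > 2` and
`‖F - k^{1/(p-1)}‖_{p,α} ≤ 2√2 (p-1)^{-1/2} C_θ^{1/2}` for `p < 2`. -/
theorem extremal_close_to_root_of_sector_kernel
    (p q α θ : ℝ) (hp1 : 1 < p) (hp2 : p ≠ 2) (hq : 1/p + 1/q = 1) (hα : -1 < α)
    (hθ0 : 0 < θ) (hθ1 : θ < 2 * Real.pi) (hθp : θ < 2 * Real.pi * (p - 1))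
    (k : ℂ → ℂ) (hk : MemAp q α k) (hknorm : bNorm q α k = 1)
    (hsector : ∀ z ∈ unitDisc, k z ≠ 0 ∧ |Complex.arg (k z)| < θ/2)
    (F : ℂ → ℂ) (hF : IsExtremalFor p α k F)
    (Cpα : ℝ) (hCp : 0 < Cpα)
    (hCproj : ∀ s : ℝ, s = p ∨ s = q → ∀ g : ℂ → ℂ,
      IntegrableOn (fun z => ‖g z‖ ^ s * wt α z) unitDisc →
      bNorm s α (bergmanProj α g) ≤ Cpα * bNorm s α g)
    (hCθ : 2 * Cpα * |Real.sin ((p - 2) * θ / (4 * (p - 1)))| < 1) :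
    (2 < p → bNorm p α
        (fun z => F z - Complex.exp (Complex.log (k z) / (p - 1)))
      ≤ 2 * p ^ (1/p)
          * (2 * Cpα * |Real.sin ((p - 2) * θ / (4 * (p - 1)))|) ^ (1/p)) ∧
    (p < 2 → bNorm p α
        (fun z => F z - Complex.exp (Complex.log (k z) / (p - 1)))
      ≤ 2 * Real.sqrt 2 * (p - 1) ^ (-(1:ℝ)/2)
          * (2 * Cpα * |Real.sin ((p - 2) * θ / (4 * (p - 1)))|) ^ ((1:ℝ)/2)) := by
  have hp0 : 0 < p := by linarith
  have hp1' : 0 < p - 1 := by linarith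
  have hpq : p.HolderConjugate q :=
    Real.holderConjugate_iff.2 ⟨hp1, by simpa only [one_div] using hq⟩
  have hqp : q = p / (p - 1) := hpq.conjugate_eq
  have hk1 := integral_eq_one_of_bNorm_s15 hα hpq.symm.pos hknorm
  have hF1 := integral_eq_one_of_bNorm_s15 hα hp0 hF.2.1
  set f : ℂ → ℂ := fun z => Complex.exp (Complex.log (k z) / (p - 1)) with hf
  set σ : ℝ := |Real.sin ((p - 2) * θ / (4 * (p - 1)))| with hσ
  have hσ0 : 0 < σ := by
    have hb := abs_le.1 (half_angle_le hp1 hθ0 hθ1 hθp)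
    rw [hσ, abs_pos, Ne, Real.sin_eq_zero_iff_of_lt_of_lt
      (by linarith [Real.pi_pos]) (by linarith [Real.pi_pos])]
    have : p - 2 ≠ 0 := sub_ne_zero.2 hp2
    positivity
  have hC : 1 ≤ Cpα := one_le_bound hα (hCproj p (Or.inl rfl))
  have hεC : 2 * σ ≤ 2 * Cpα * σ := by nlinarith
  have hfne : ∀ z, f z ≠ 0 := fun z => Complex.exp_ne_zero _
  have hfd : DifferentiableOn ℂ f unitDisc := by
    refine DifferentiableOn.cexp (DifferentiableOn.div_const ?_ _)
    refine hk.1.clog fun z hz => ?_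
    obtain ⟨h1, h2⟩ := hsector z hz
    refine Complex.mem_slitPlane_iff_arg.2 ⟨fun h => ?_, h1⟩
    rw [h, abs_of_pos Real.pi_pos] at h2
    linarith
  have hfk : ∀ z ∈ unitDisc, ‖k z‖ ^ q * wt α z = ‖f z‖ ^ p * wt α z := by
    intro z hz
    rw [hf, norm_root_rpow (hsector z hz).1 hqp]
  have hf1 : ∫ z in unitDisc, ‖f z‖ ^ p * wt α z = 1 := by
    rw [← hk1]
    exact (setIntegral_congr_fun measurableSet_unitDisc hfk).symm
  have hfA : MemAp p α f := ⟨hfd, hk.2.congr_fun hfk measurableSet_unitDisc⟩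
  have hext := hF.2.2 f hfA (by rw [bNorm, hf1, Real.one_rpow])
  have hclose : ∀ z ∈ unitDisc, ‖((‖f z‖ ^ (p - 2) : ℝ) : ℂ) * f z - k z‖ ≤ 2 * σ * ‖k z‖ :=
    fun z hz => dual_root_close hp1 hθ1 hθp (hsector z hz).1 (hsector z hz).2
  have hcd : ContinuousOn (fun z => F z - f z) unitDisc :=
    hF.1.1.continuousOn.sub hfd.continuousOn
  have hN0 := bNorm_integral_nonneg hα p fun z => F z - f z
  refine ⟨fun h2 => ?_, fun h2 => ?_⟩
  · obtain ⟨-, hR⟩ := remainder_bound hα hpq (by positivity) hfA hF.1 hk hf1 hF1 hk1 hclose hext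
      (D := fun z => 2 * (‖F z - f z‖ / 2) ^ p)
      (continuousOn_const.mul ((hcd.norm.div_const 2).rpow_const fun _ _ => Or.inr hp0.le))
      (fun z _ => by positivity) (fun z _ => bregman_gt_two h2 (hfne z) (F z))
    have e : ∀ z ∈ unitDisc, 2 * (‖F z - f z‖ / 2) ^ p * wt α z
        = 2 / 2 ^ p * (‖F z - f z‖ ^ p * wt α z) := by
      intro z _
      rw [Real.div_rpow (norm_nonneg _) zero_le_two]
      ring
    rw [setIntegral_congr_fun measurableSet_unitDisc e, integral_const_mul] at hR
    have h2p : (0:ℝ) < 2 ^ p := by positivity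
    have hN : ∫ z in unitDisc, ‖F z - f z‖ ^ p * wt α z ≤ 2 ^ p * (p * (2 * Cpα * σ)) := by
      rw [div_mul_eq_mul_div, div_le_iff₀ h2p] at hR
      have : 2 ^ p * (p * (2 * σ)) ≤ 2 ^ p * (p * (2 * Cpα * σ)) := by gcongr
      linarith
    refine (Real.rpow_le_rpow hN0 hN (by positivity)).trans (le_of_eq ?_)
    rw [Real.mul_rpow (by positivity) (by positivity), Real.mul_rpow (by positivity) (by positivity),
      ← Real.rpow_mul zero_le_two, mul_one_div_cancel hp0.ne', Real.rpow_one]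
    ring
  · set M : ℂ → ℝ := fun z => max ‖f z‖ ‖F z‖ with hM
    have hM0 : ∀ z, 0 < M z := fun z => lt_max_of_lt_left (norm_pos_iff.2 (hfne z))
    have hMc : ContinuousOn M unitDisc := hfd.continuousOn.norm.sup hF.1.1.continuousOn.norm
    obtain ⟨hRi, hR⟩ := remainder_bound hα hpq (by positivity) hfA hF.1 hk hf1 hF1 hk1 hclose hext
      (D := fun z => p * (p - 1) / 2 * (‖F z - f z‖ ^ 2 * M z ^ (p - 2)))
      (continuousOn_const.mul ((hcd.norm.pow 2).mul
        (hMc.rpow_const fun z _ => Or.inl (hM0 z).ne')))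
      (fun z _ => by have := hM0 z; positivity)
      (fun z _ => bregman_lt_two hp1 h2 (hfne z) (F z))
    have hc0 : 0 < p * (p - 1) / 2 := by positivity
    have e : ∀ z, p * (p - 1) / 2 * (‖F z - f z‖ ^ 2 * M z ^ (p - 2)) * wt α z
        = p * (p - 1) / 2 * (‖F z - f z‖ ^ 2 * M z ^ (p - 2) * wt α z) := fun z => by ring
    simp only [e] at hRi hR
    have hXi : IntegrableOn (fun z => ‖F z - f z‖ ^ 2 * M z ^ (p - 2) * wt α z) unitDisc :=
      (integrable_const_mul_iff (IsUnit.mk0 _ hc0.ne') _).1 hRi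
    rw [integral_const_mul] at hR
    have hX : ∫ z in unitDisc, ‖F z - f z‖ ^ 2 * M z ^ (p - 2) * wt α z
        ≤ 4 * (2 * Cpα * σ) / (p - 1) := by
      rw [le_div_iff₀ hp1']
      have : p * (2 * (p * (p - 1) / 2 * ∫ z in unitDisc, ‖F z - f z‖ ^ 2 * M z ^ (p - 2) * wt α z))
          ≤ p * (2 * (2 * p * (2 * σ))) := by gcongr
      have h3 : (∫ z in unitDisc, ‖F z - f z‖ ^ 2 * M z ^ (p - 2) * wt α z) * (p - 1)
          ≤ 4 * (2 * σ) := by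
        refine le_of_mul_le_mul_left ?_ (mul_pos hp0 hp0)
        linarith
      linarith
    have hMle : ∀ z ∈ unitDisc, M z ^ p * wt α z ≤ ‖f z‖ ^ p * wt α z + ‖F z‖ ^ p * wt α z := by
      intro z hz
      rw [← add_mul]
      refine mul_le_mul_of_nonneg_right ?_ (wt_pos hα hz).le
      have h3 := Real.rpow_nonneg (norm_nonneg (f z)) p
      have h4 := Real.rpow_nonneg (norm_nonneg (F z)) p
      rcases max_choice ‖f z‖ ‖F z‖ with h | h <;> simp only [hM, h] <;> linarith
    have hsum : IntegrableOn (fun z => ‖f z‖ ^ p * wt α z + ‖F z‖ ^ p * wt α z) unitDisc :=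
      hfA.2.add hF.1.2
    have hYi : IntegrableOn (fun z => M z ^ p * wt α z) unitDisc := by
      refine Integrable.mono' hsum (ContinuousOn.aestronglyMeasurable
        ((hMc.rpow_const fun _ _ => Or.inr hp0.le).mul (continuousOn_wt α))
        measurableSet_unitDisc) ?_
      refine (ae_restrict_iff' measurableSet_unitDisc).2
        (Filter.Eventually.of_forall fun z hz => ?_)
      have := hM0 z
      rw [Real.norm_of_nonneg (mul_nonneg (by positivity) (wt_pos hα hz).le)]
      exact hMle z hz
    have hY : ∫ z in unitDisc, M z ^ p * wt α z ≤ 2 := by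
      refine (setIntegral_mono_on hYi hsum measurableSet_unitDisc hMle).trans ?_
      rw [integral_add hfA.2 hF.1.2, hf1, hF1]
      norm_num
    have hX0 : 0 < 4 * (2 * Cpα * σ) / (p - 1) := by positivity
    have hN := integral_rpow_le_of_weighted hα hp0 h2 hX0 two_pos (fun z _ => hM0 z) hcd hXi hYi
      hX hY
    refine (Real.rpow_le_rpow hN0 hN (by positivity)).trans ?_
    rw [Real.mul_rpow (by positivity) (by positivity), ← Real.rpow_mul hX0.le,
      ← Real.rpow_mul zero_le_two, show p / 2 * (1 / p) = 1 / 2 by field_simp]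
    have h5 : (2:ℝ) ^ ((1 - p / 2) * (1 / p)) ≤ 2 ^ ((1:ℝ) / 2) := by
      refine Real.rpow_le_rpow_of_exponent_le one_le_two ?_
      rw [mul_one_div, div_le_iff₀ hp0]
      linarith
    refine (mul_le_mul_of_nonneg_left h5 (by positivity)).trans (le_of_eq ?_)
    have h6 : (4:ℝ) ^ ((1:ℝ) / 2) = 2 := by
      rw [← Real.sqrt_eq_rpow, show (4:ℝ) = 2 ^ 2 by norm_num, Real.sqrt_sq zero_le_two]
    rw [Real.div_rpow (by positivity) hp1'.le, Real.mul_rpow (by norm_num) (by positivity), h6,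
      Real.sqrt_eq_rpow, neg_div, Real.rpow_neg hp1'.le]
    ring
end
end
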